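/- arXiv:2603.04121 — 2 statements merged into one kernel-verified Lean document; each statement's English description precedes it below -/
import Mathlib

section
/- For each m ∈ {−1, 0, 1}, the function φ_m is twice continuously differentiable on (0,∞)×ℝ, satisfies v ∂ₓφ_m(x,v) = ∂_vvφ_m(x,v) for all (x,v) ∈ (0,∞)×ℝ, and satisfies φ_m(x,v) → 0 as x → 0⁺ for every fixed v > 0. Moreover, φ₀ and φ₁ are weak solutions of v∂ₓφ − ∂_vvφ = 0 in (0,∞)×ℝ with boundary data 0 on {0}×(0,∞). -/
/-!
All three functions are self-similar, `φ(x,v) = x^α G(v x^{-1/3})` with `α = -5/6, 1/6, 7/6`. Such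
a field solves `v ∂ₓφ = ∂ᵥᵥφ` on `(0,∞) × ℝ` exactly when its profile solves
`G'' + (t²/3) G' - α t G = 0` on all of `ℝ`, and it vanishes at `{0} × (0,∞)` when `G` decays
rapidly at `+∞`.

The profile of `φ₀` is glued at `t = 0` from two Tricomi functions of `z = ∓t³/9`. Contiguous
relations and Kummer's transformation (a consequence of Fubini's theorem) show that for `t ≠ 0` its
derivative is given by a single Tricomi function on both sides. Both are continuous at `0`, so the
profile equation extends across `t = 0`; this is the regularity at `v = 0`. The operator `∂ₓ` lowers
`α` by `1`, and it can be inverted algebraically on profiles: `φ₋₁` is a multiple of `∂ₓφ₀`, and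
`∂ₓφ₁` is a multiple of `φ₀`.

For the weak formulation, integrate by parts over `x > ε`: the only remaining term is
`∫ v φ(ε,v) ψ(ε,v) dv`. It tends to `0` by dominated convergence, because `φ` is bounded near
`x = 0`, `φ(ε,v) → 0` for `v > 0`, and `ψ(0,v) = 0` for `v < 0`. The bound `∂ᵥφ = O(x^{-1/3})` makes
all the integrands integrable up to the boundary.
-/

noncomputable section

open MeasureTheory Set Filter
open scoped ENNReal

/-- The one-dimensional phase space, with points `p = (x, v)`. -/
abbrev P2 : Type := ℝ × ℝ

/-- `hv` is the weak derivative of `h` in the second (velocity) variable on `D`. -/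
def IsWeakVDeriv (D : Set P2) (h hv : P2 → ℝ) : Prop :=
  ∀ ψ : P2 → ℝ, ContDiff ℝ ((⊤ : ℕ∞) : WithTop ℕ∞) ψ → HasCompactSupport ψ →
    tsupport ψ ⊆ D →
    (∫ p in D, h p * fderiv ℝ ψ p ((0:ℝ), (1:ℝ))) = -∫ p in D, hv p * ψ p

/-- `U₁(z) = (1/Γ(5/6)) ∫₀^∞ e^{−zξ} ξ^{−1/6} (1+ξ)^{−7/6} dξ`. -/
def U1 (z : ℝ) : ℝ :=
  (1 / Real.Gamma (5/6)) *
    ∫ ξ in Set.Ioi (0:ℝ), Real.exp (-(z * ξ)) * ξ ^ (-(1:ℝ)/6) * (1 + ξ) ^ (-(7:ℝ)/6)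

/-- `U₂(z) = (1/Γ(1/6)) ∫₀^∞ e^{−ξ} ξ^{−5/6} (z+ξ)^{1/6} dξ`. -/
def U2 (z : ℝ) : ℝ :=
  (1 / Real.Gamma (1/6)) *
    ∫ ξ in Set.Ioi (0:ℝ), Real.exp (-ξ) * ξ ^ (-(5:ℝ)/6) * (z + ξ) ^ ((1:ℝ)/6)

/-- The explicit `1/2`-homogeneous solution `φ₀` of the stationary kinetic Kolmogorov equation
in the half-line with absorbing boundary condition. -/
def phi0 (x v : ℝ) : ℝ :=
  if v < 0 then x ^ ((1:ℝ)/6) * U2 (-(v ^ 3) / (9 * x))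
  else (Real.Gamma (7/6) / Real.Gamma (1/6)) * x ^ ((1:ℝ)/6) *
    Real.exp (-(v ^ 3) / (9 * x)) * U1 (v ^ 3 / (9 * x))

/-- The explicit solution `φ₋₁`. -/
def phim1 (x v : ℝ) : ℝ :=
  if v < 0 then x ^ (-(5:ℝ)/6) * U1 (-(v ^ 3) / (9 * x))
  else (Real.Gamma (1/6) / Real.Gamma (7/6)) * x ^ (-(5:ℝ)/6) *
    Real.exp (-(v ^ 3) / (9 * x)) * U2 (v ^ 3 / (9 * x))

/-- `U₃(z) = (1/Γ(11/6)) ∫₀^∞ e^{−zξ} ξ^{5/6} (1+ξ)^{−13/6} dξ`. -/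
def U3 (z : ℝ) : ℝ :=
  (1 / Real.Gamma (11/6)) *
    ∫ ξ in Set.Ioi (0:ℝ), Real.exp (-(z * ξ)) * ξ ^ ((5:ℝ)/6) * (1 + ξ) ^ (-(13:ℝ)/6)

/-- `U₄(z) = (1/36) U₁(z) − (1 − z) U₂(z)`. -/
def U4 (z : ℝ) : ℝ := (1/36) * U1 z - (1 - z) * U2 z

/-- The explicit `7/2`-homogeneous solution `φ₁`, where `Γ(−5/6) = −(6/5)Γ(1/6)`. -/
def phi1 (x v : ℝ) : ℝ :=
  if v < 0 then -(x ^ ((7:ℝ)/6) * U4 (-(v ^ 3) / (9 * x)))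
  else -((Real.Gamma (13/6) / (-(6/5) * Real.Gamma (1/6))) * x ^ ((7:ℝ)/6) *
    Real.exp (-(v ^ 3) / (9 * x)) * U3 (v ^ 3 / (9 * x)))

/-- partial derivative in the first (space) variable -/
def pdx (h : P2 → ℝ) : P2 → ℝ := fun p => fderiv ℝ h p ((1:ℝ), (0:ℝ))

/-- partial derivative in the second (velocity) variable -/
def pdv (h : P2 → ℝ) : P2 → ℝ := fun p => fderiv ℝ h p ((0:ℝ), (1:ℝ))

/-- The half-plane `(0,∞) × ℝ`. -/
def Dinf : Set P2 := Set.Ioi (0:ℝ) ×ˢ (Set.univ : Set ℝ)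

/-- Weak solution of `v ∂ₓ h − ∂ᵥᵥ h = 0` in `(0,∞) × ℝ` with `h = 0` on `{0} × (0,∞)`. -/
def IsWeakSolZero (h hv : P2 → ℝ) : Prop :=
  LocallyIntegrableOn (fun p => h p ^ 2) Dinf ∧
  LocallyIntegrableOn (fun p => hv p ^ 2) Dinf ∧
  IsWeakVDeriv Dinf h hv ∧
  ∀ ψ : P2 → ℝ, ContDiff ℝ ((⊤ : ℕ∞) : WithTop ℕ∞) ψ → HasCompactSupport ψ →
    tsupport ψ ∩ {p : P2 | p.1 = 0} ⊆ {p : P2 | p.1 = 0 ∧ 0 ≤ p.2} →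
    (-∫ p in Dinf, h p * (p.2 * fderiv ℝ ψ p ((1:ℝ), (0:ℝ))))
        + (∫ p in Dinf, hv p * fderiv ℝ ψ p ((0:ℝ), (1:ℝ))) = 0

section

open scoped Topology
open Asymptotics

theorem rpow_le_rpow_add_rpow {a b c : ℝ} (ha : 0 < a) (hab : a ≤ b) (hbc : b ≤ c) (r : ℝ) :
    b ^ r ≤ a ^ r + c ^ r := by
  have hb : 0 < b := ha.trans_le hab
  rcases le_total 0 r with hr | hr
  · have := Real.rpow_le_rpow hb.le hbc hr
    have := Real.rpow_nonneg ha.le r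
    linarith
  · have := Real.rpow_le_rpow_of_nonpos ha hab hr
    have := Real.rpow_nonneg (hb.le.trans hbc) r
    linarith

theorem add_rpow_le_two_rpow_abs_mul {z s : ℝ} (hz : 0 ≤ z) (hs : 0 < s) (r : ℝ) :
    (z + s) ^ r ≤ 2 ^ |r| * (z ^ r + s ^ r) := by
  have hzr : 0 ≤ z ^ r := Real.rpow_nonneg hz r
  rcases le_total 0 r with hr | hr
  · rw [abs_of_nonneg hr, mul_add, ← Real.mul_rpow zero_le_two hz,
      ← Real.mul_rpow zero_le_two hs.le]
    rcases le_total z s with h | h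
    · have := Real.rpow_le_rpow (by positivity) (by linarith : z + s ≤ 2 * s) hr
      have : 0 ≤ (2 * z) ^ r := by positivity
      linarith
    · have := Real.rpow_le_rpow (by positivity) (by linarith : z + s ≤ 2 * z) hr
      have : 0 ≤ (2 * s) ^ r := by positivity
      linarith
  · calc (z + s) ^ r ≤ s ^ r := Real.rpow_le_rpow_of_nonpos hs (by linarith) hr
      _ ≤ 1 * (z ^ r + s ^ r) := by linarith
      _ ≤ 2 ^ |r| * (z ^ r + s ^ r) := by
        gcongr
        exact Real.one_le_rpow one_le_two (abs_nonneg r)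

/-- The integrand of `tricomi p q z`. -/
def tricomiKernel (p q z s : ℝ) : ℝ := Real.exp (-s) * s ^ (q - 1) * (z + s) ^ (-p)

/-- The normalised Laplace-type integral `Γ(q)⁻¹ ∫₀^∞ e^{-s} s^{q-1} (z+s)^{-p} ds`. For `z > 0` it
is Tricomi's confluent hypergeometric function `z^{q-p} U(q, q-p+1, z) = U(p, p-q+1, z)`; the
parameters `p, q` are chosen so that the symmetry `tricomi_swap` exchanges them. -/
def tricomi (p q z : ℝ) : ℝ := 1 / Real.Gamma q * ∫ s in Ioi (0 : ℝ), tricomiKernel p q z s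

section Tricomi

variable {p q z : ℝ}

theorem measurable_tricomiKernel (p q z : ℝ) : Measurable (tricomiKernel p q z) := by
  unfold tricomiKernel
  fun_prop

theorem tricomiKernel_nonneg {s : ℝ} (hz : 0 ≤ z) (hs : 0 < s) : 0 ≤ tricomiKernel p q z s := by
  unfold tricomiKernel
  positivity

theorem integrableOn_tricomiKernel (hq : 0 < q) (hz : 0 ≤ z) (h : 0 < z ∨ p < q) :
    IntegrableOn (tricomiKernel p q z) (Ioi 0) := by
  have hΓ := Real.GammaIntegral_convergent hq
  rcases lt_or_ge p q with hpq | hpq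
  · have hΓ' := Real.GammaIntegral_convergent (sub_pos.2 hpq)
    refine (((hΓ.mul_const (z ^ (-p))).add hΓ').const_mul (2 ^ |(-p)|)).mono'
      (measurable_tricomiKernel p q z).aestronglyMeasurable
      ((ae_restrict_mem measurableSet_Ioi).mono fun s (hs : 0 < s) => ?_)
    rw [Real.norm_of_nonneg (tricomiKernel_nonneg hz hs)]
    calc tricomiKernel p q z s
        ≤ Real.exp (-s) * s ^ (q - 1) * (2 ^ |(-p)| * (z ^ (-p) + s ^ (-p))) :=
          mul_le_mul_of_nonneg_left (add_rpow_le_two_rpow_abs_mul hz hs _) (by positivity)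
      _ = _ := by
        simp only [Pi.add_apply]
        rw [show q - p - 1 = q - 1 + -p by ring, Real.rpow_add hs]
        ring
  · have hz : 0 < z := h.resolve_right hpq.not_gt
    refine (hΓ.mul_const (z ^ (-p))).mono'
      (measurable_tricomiKernel p q z).aestronglyMeasurable
      ((ae_restrict_mem measurableSet_Ioi).mono fun s (hs : 0 < s) => ?_)
    rw [Real.norm_of_nonneg (tricomiKernel_nonneg hz.le hs)]
    exact mul_le_mul_of_nonneg_left
      (Real.rpow_le_rpow_of_nonpos hz (by linarith) (by linarith)) (by positivity)

theorem tricomiKernel_le_add {a b s : ℝ} (ha : 0 ≤ a) (haz : a ≤ z) (hzb : z ≤ b) (hs : 0 < s) :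
    tricomiKernel p q z s ≤ tricomiKernel p q a s + tricomiKernel p q b s := by
  unfold tricomiKernel
  rw [← mul_add]
  gcongr
  exact rpow_le_rpow_add_rpow (by positivity) (by linarith) (by linarith) _

theorem hasDerivAt_tricomiKernel {s : ℝ} (hz : 0 < z) (hs : 0 < s) :
    HasDerivAt (fun z => tricomiKernel p q z s) (-p * tricomiKernel (p + 1) q z s) z := by
  have h : HasDerivAt (fun z => (z + s) ^ (-p)) (1 * -p * (z + s) ^ (-p - 1)) z :=
    ((hasDerivAt_id z).add_const s).rpow_const (Or.inl (add_pos hz hs).ne')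
  refine (h.const_mul (Real.exp (-s) * s ^ (q - 1))).congr_deriv ?_
  rw [tricomiKernel, neg_add']
  ring

theorem hasDerivAt_tricomi (hq : 0 < q) (hz : 0 < z) :
    HasDerivAt (tricomi p q) (-p * tricomi (p + 1) q z) z := by
  have hdom := hasDerivAt_integral_of_dominated_loc_of_deriv_le
    (μ := volume.restrict (Ioi (0 : ℝ))) (F := tricomiKernel p q)
    (F' := fun z s => -p * tricomiKernel (p + 1) q z s) (s := Ioo (z / 2) (2 * z))
    (bound := fun s =>
      |p| * (tricomiKernel (p + 1) q (z / 2) s + tricomiKernel (p + 1) q (2 * z) s))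
    (Ioo_mem_nhds (by linarith) (by linarith))
    (Eventually.of_forall fun y => (measurable_tricomiKernel p q y).aestronglyMeasurable)
    (integrableOn_tricomiKernel hq hz.le (Or.inl hz))
    ((measurable_tricomiKernel _ q z).const_mul (-p)).aestronglyMeasurable ?_
    (((integrableOn_tricomiKernel hq (by positivity) (Or.inl (by positivity))).add
      (integrableOn_tricomiKernel hq (by positivity) (Or.inl (by positivity)))).const_mul _) ?_
  · refine (hdom.2.const_mul (1 / Real.Gamma q)).congr_deriv ?_
    rw [integral_const_mul, tricomi]
    ring
  · refine (ae_restrict_mem measurableSet_Ioi).mono fun s (hs : 0 < s) y hy => ?_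
    have hy0 : 0 < y := (half_pos hz).trans hy.1
    rw [norm_mul, norm_neg, Real.norm_eq_abs, Real.norm_of_nonneg (tricomiKernel_nonneg hy0.le hs)]
    gcongr
    exact tricomiKernel_le_add (half_pos hz).le hy.1.le hy.2.le hs
  · exact (ae_restrict_mem measurableSet_Ioi).mono fun s (hs : 0 < s) y hy =>
      hasDerivAt_tricomiKernel ((half_pos hz).trans hy.1) hs

theorem continuousWithinAt_tricomi_zero (hq : 0 < q) (hpq : p < q) :
    ContinuousWithinAt (tricomi p q) (Ici 0) 0 := by
  refine continuousWithinAt_const.mul (continuousWithinAt_of_dominated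
    (bound := fun s => tricomiKernel p q 0 s + tricomiKernel p q 1 s)
    (Eventually.of_forall fun y => (measurable_tricomiKernel p q y).aestronglyMeasurable) ?_
    ((integrableOn_tricomiKernel hq le_rfl (Or.inr hpq)).add
      (integrableOn_tricomiKernel hq zero_le_one (Or.inr hpq))) ?_)
  · filter_upwards [self_mem_nhdsWithin, mem_nhdsWithin_of_mem_nhds (Iic_mem_nhds zero_lt_one)]
      with y (hy : 0 ≤ y) (hy1 : y ≤ 1)
    refine (ae_restrict_mem measurableSet_Ioi).mono fun s (hs : 0 < s) => ?_
    rw [Real.norm_of_nonneg (tricomiKernel_nonneg hy hs)]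
    exact tricomiKernel_le_add le_rfl hy hy1 hs
  · refine (ae_restrict_mem measurableSet_Ioi).mono fun s (hs : 0 < s) => ?_
    have h : ContinuousAt (fun z : ℝ => (z + s) ^ (-p)) 0 :=
      (continuousAt_id.add continuousAt_const).rpow_const (Or.inl (by simpa using hs.ne'))
    exact (h.const_mul _).continuousWithinAt

theorem tricomi_nonneg (hq : 0 < q) (hz : 0 ≤ z) : 0 ≤ tricomi p q z :=
  mul_nonneg (by positivity)
    (setIntegral_nonneg measurableSet_Ioi fun _ hs => tricomiKernel_nonneg hz hs)

theorem tricomi_le_tricomi_zero (hp : 0 ≤ p) (hpq : p < q) (hz : 0 ≤ z) :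
    tricomi p q z ≤ tricomi p q 0 := by
  have hq : 0 < q := hp.trans_lt hpq
  refine mul_le_mul_of_nonneg_left (setIntegral_mono_on
    (integrableOn_tricomiKernel hq hz (Or.inr hpq))
    (integrableOn_tricomiKernel hq le_rfl (Or.inr hpq)) measurableSet_Ioi
    fun s (hs : 0 < s) => ?_) (by positivity)
  exact mul_le_mul_of_nonneg_left
    (Real.rpow_le_rpow_of_nonpos (by linarith) (by linarith) (by linarith)) (by positivity)

theorem tricomi_le_one_add_rpow_mul (hp : p ≤ 0) (hq : 0 < q) (hz : 0 ≤ z) :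
    tricomi p q z ≤ (1 + z) ^ (-p) * tricomi p q 1 := by
  have hpq : p < q := hp.trans_lt hq
  rw [tricomi, tricomi, mul_left_comm, ← integral_const_mul ((1 + z) ^ (-p))]
  refine mul_le_mul_of_nonneg_left (setIntegral_mono_on
    (integrableOn_tricomiKernel hq hz (Or.inr hpq))
    ((integrableOn_tricomiKernel hq zero_le_one (Or.inr hpq)).const_mul _) measurableSet_Ioi
    fun s (hs : 0 < s) => ?_) (by positivity)
  rw [tricomiKernel, tricomiKernel, mul_left_comm, ← Real.mul_rpow (by positivity) (by positivity)]
  exact mul_le_mul_of_nonneg_left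
    (Real.rpow_le_rpow (by positivity) (by nlinarith) (by linarith)) (by positivity)

theorem tricomi_eq_mul_add (hq : 0 < q) (hz : 0 ≤ z) (h : 0 < z ∨ p < q) :
    tricomi p q z = z * tricomi (p + 1) q z + q * tricomi (p + 1) (q + 1) z := by
  have hker : EqOn (tricomiKernel p q z)
      (fun s => z * tricomiKernel (p + 1) q z s + tricomiKernel (p + 1) (q + 1) z s) (Ioi 0) := by
    intro s (hs : 0 < s)
    have hzs : z + s ≠ 0 := (by linarith : 0 < z + s).ne'
    simp only [tricomiKernel]
    rw [show -p = -(p + 1) + 1 by ring, Real.rpow_add_one hzs,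
      show q + 1 - 1 = q - 1 + 1 by ring, Real.rpow_add_one hs.ne']
    ring
  have hint : IntegrableOn (fun s => z * tricomiKernel (p + 1) q z s) (Ioi 0) := by
    rcases hz.eq_or_lt with rfl | hz'
    · simp
    · exact (integrableOn_tricomiKernel hq hz (Or.inl hz')).const_mul z
  have hint' : IntegrableOn (tricomiKernel (p + 1) (q + 1) z) (Ioi 0) :=
    integrableOn_tricomiKernel (by linarith) hz (h.imp_right fun h => by linarith)
  rw [tricomi, setIntegral_congr_fun measurableSet_Ioi hker, integral_add hint hint',
    integral_const_mul, tricomi, tricomi, Real.Gamma_add_one hq.ne']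
  field_simp

theorem hasDerivAt_tricomiKernel_right {s : ℝ} (hz : 0 < z) (hs : 0 < s) :
    HasDerivAt (tricomiKernel p (q + 1) z)
      (q * tricomiKernel p q z s - tricomiKernel p (q + 1) z s
        - p * tricomiKernel (p + 1) (q + 1) z s) s := by
  have h1 : HasDerivAt (fun s => Real.exp (-s)) (Real.exp (-s) * -1) s := (hasDerivAt_neg s).exp
  have h2 := (hasDerivAt_id s).rpow_const (p := q + 1 - 1) (Or.inl hs.ne')
  have h3 := ((hasDerivAt_id s).const_add z).rpow_const (p := -p) (Or.inl (add_pos hz hs).ne')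
  refine ((h1.mul h2).mul h3).congr_deriv ?_
  simp only [tricomiKernel, id, add_sub_cancel_right, Pi.mul_apply]
  rw [neg_add']
  ring

theorem tricomi_eq_add_mul (hq : 0 < q) (hz : 0 < z) :
    tricomi p q z = tricomi p (q + 1) z + p * tricomi (p + 1) (q + 1) z := by
  have hq1 : 0 < q + 1 := by linarith
  have hi (p' q' : ℝ) (hq' : 0 < q') := integrableOn_tricomiKernel (p := p') hq' hz.le (Or.inl hz)
  have hder := fun s (hs : s ∈ Ioi (0 : ℝ)) =>
    hasDerivAt_tricomiKernel_right (p := p) (q := q) hz hs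
  have hint₁ : IntegrableOn (fun s => q * tricomiKernel p q z s - tricomiKernel p (q + 1) z s)
      (Ioi 0) := ((hi p q hq).const_mul q).sub (hi p (q + 1) hq1)
  have hint₂ := (hi (p + 1) (q + 1) hq1).const_mul p
  have hcont : ContinuousAt (tricomiKernel p (q + 1) z) 0 := by
    have hs := Real.continuousAt_rpow_const 0 (q + 1 - 1) (Or.inr (by linarith))
    have hzs : ContinuousAt (fun s : ℝ => (z + s) ^ (-p)) 0 :=
      (continuousAt_const.add continuousAt_id).rpow_const (Or.inl (by simpa using hz.ne'))
    exact ((Real.continuous_exp.comp continuous_neg).continuousAt.mul hs).mul hzs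
  have hparts := integral_Ioi_of_hasDerivAt_of_tendsto hcont.continuousWithinAt hder
    (hint₁.sub hint₂)
    (tendsto_zero_of_hasDerivAt_of_integrableOn_Ioi hder (hint₁.sub hint₂) (hi p (q + 1) hq1))
  have hzero : tricomiKernel p (q + 1) z 0 = 0 := by
    simp [tricomiKernel, Real.zero_rpow hq.ne']
  rw [hzero, sub_zero, integral_sub hint₁ hint₂,
    integral_sub ((hi p q hq).const_mul q) (hi p (q + 1) hq1), integral_const_mul,
    integral_const_mul] at hparts
  rw [tricomi, tricomi, tricomi, Real.Gamma_add_one hq.ne']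
  field_simp
  linarith

theorem lintegral_const_mul_exp_neg_mul_mul_rpow {A b : ℝ} (hA : 0 ≤ A) (hb : 0 < b)
    (hq : 0 < q) :
    ∫⁻ s in Ioi (0 : ℝ), ENNReal.ofReal (A * (Real.exp (-(b * s)) * s ^ (q - 1))) =
      ENNReal.ofReal (A * (Real.Gamma q * b ^ (-q))) := by
  have hint : IntegrableOn (fun s : ℝ => s ^ (q - 1) * Real.exp (-(b * s))) (Ioi 0) := by
    simpa only [Real.rpow_one, neg_mul] using
      integrableOn_rpow_mul_exp_neg_mul_rpow (by linarith : -1 < q - 1) one_pos hb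
  simp only [mul_comm (Real.exp _)]
  rw [← ofReal_integral_eq_lintegral_ofReal (hint.const_mul A), integral_const_mul,
    Real.integral_rpow_mul_exp_neg_mul_Ioi hq hb, one_div, Real.inv_rpow hb.le,
    ← Real.rpow_neg hb.le, mul_comm (b ^ (-q))]
  exact (ae_restrict_mem measurableSet_Ioi).mono fun s (hs : 0 < s) => by
    simp only [Pi.zero_apply]; positivity

theorem tricomi_eq_laplace (hp : 0 < p) (hq : 0 < q) (hz : 0 ≤ z) :
    tricomi p q z = 1 / Real.Gamma p *
      ∫ ξ in Ioi (0 : ℝ), Real.exp (-(z * ξ)) * ξ ^ (p - 1) * (1 + ξ) ^ (-q) := by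
  -- Expand `Γ(q) (1+ξ)^{-q}` and `Γ(p) (z+s)^{-p}` as Gamma integrals in `s` and `ξ`: the two
  -- sides become the same double integral in opposite orders.
  let A (ξ : ℝ) : ℝ := Real.exp (-(z * ξ)) * ξ ^ (p - 1)
  let B (s : ℝ) : ℝ := Real.exp (-s) * s ^ (q - 1)
  have hAB (ξ s : ℝ) : A ξ * (Real.exp (-((1 + ξ) * s)) * s ^ (q - 1)) =
      B s * (Real.exp (-((z + s) * ξ)) * ξ ^ (p - 1)) := by
    have hexp : Real.exp (-(z * ξ)) * Real.exp (-((1 + ξ) * s)) =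
        Real.exp (-s) * Real.exp (-((z + s) * ξ)) := by
      rw [← Real.exp_add, ← Real.exp_add]
      ring_nf
    linear_combination ξ ^ (p - 1) * s ^ (q - 1) * hexp
  have hswap := lintegral_lintegral_swap (μ := volume.restrict (Ioi (0 : ℝ)))
    (ν := volume.restrict (Ioi (0 : ℝ)))
    (f := fun ξ s => ENNReal.ofReal (A ξ * (Real.exp (-((1 + ξ) * s)) * s ^ (q - 1))))
    (by simp only [A, Function.uncurry_def]; fun_prop)
  have hA : ∀ ξ ∈ Ioi (0 : ℝ), 0 ≤ A ξ := fun ξ (hξ : 0 < ξ) => by positivity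
  have hB : ∀ s ∈ Ioi (0 : ℝ), 0 ≤ B s := fun s (hs : 0 < s) => by positivity
  rw [setLIntegral_congr_fun measurableSet_Ioi fun ξ (hξ : 0 < ξ) =>
      lintegral_const_mul_exp_neg_mul_mul_rpow (hA ξ hξ) (by positivity) hq] at hswap
  simp only [hAB] at hswap
  rw [setLIntegral_congr_fun measurableSet_Ioi fun s (hs : 0 < s) =>
      lintegral_const_mul_exp_neg_mul_mul_rpow (hB s hs) (by positivity) hp] at hswap
  have hLK : ∫ ξ in Ioi (0 : ℝ), A ξ * (Real.Gamma q * (1 + ξ) ^ (-q)) =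
      ∫ s in Ioi (0 : ℝ), B s * (Real.Gamma p * (z + s) ^ (-p)) := by
    rw [integral_eq_lintegral_of_nonneg_ae ?_ (by fun_prop),
      integral_eq_lintegral_of_nonneg_ae ?_ (by fun_prop), hswap]
    · exact (ae_restrict_mem measurableSet_Ioi).mono fun s (hs : 0 < s) => by
        simp only [Pi.zero_apply]; positivity
    · exact (ae_restrict_mem measurableSet_Ioi).mono fun ξ (hξ : 0 < ξ) => by
        simp only [Pi.zero_apply]; positivity
  simp only [mul_left_comm _ (Real.Gamma _), integral_const_mul] at hLK
  simp only [tricomi, tricomiKernel]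
  field_simp
  linarith

theorem tricomi_swap (hp : 0 < p) (hq : 0 < q) (hz : 0 < z) :
    tricomi p q z = z ^ (q - p) * tricomi q p z := by
  rw [tricomi_eq_laplace hq hp hz.le, tricomi, mul_left_comm, ← integral_const_mul (z ^ (q - p))]
  have hsub := integral_comp_mul_left_Ioi (tricomiKernel p q z) 0 hz
  rw [mul_zero, smul_eq_mul, inv_mul_eq_div, eq_div_iff hz.ne', ← integral_mul_const] at hsub
  rw [← hsub]
  congr 1
  refine setIntegral_congr_fun measurableSet_Ioi fun ξ (hξ : 0 < ξ) => ?_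
  simp only [tricomiKernel]
  rw [Real.mul_rpow hz.le hξ.le, show z + z * ξ = z * (1 + ξ) by ring,
    Real.mul_rpow hz.le (by positivity), show q - p = q - 1 + -p + 1 by ring,
    Real.rpow_add_one hz.ne', Real.rpow_add hz]
  ring

theorem isBigO_tricomi_one (hp : 0 ≤ p) (hpq : p < q) :
    tricomi p q =O[𝓟 (Ici 0)] fun _ => (1 : ℝ) :=
  isBigO_principal.2 ⟨tricomi p q 0, fun z hz => by
    rw [norm_one, mul_one, Real.norm_of_nonneg (tricomi_nonneg (hp.trans_lt hpq) hz)]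
    exact tricomi_le_tricomi_zero hp hpq hz⟩

theorem isBigO_tricomi_rpow (hp : p ≤ 0) (hq : 0 < q) :
    tricomi p q =O[𝓟 (Ici 0)] fun z => (1 + z) ^ (-p) :=
  isBigO_principal.2 ⟨tricomi p q 1, fun z (hz : 0 ≤ z) => by
    rw [Real.norm_of_nonneg (tricomi_nonneg hq hz), Real.norm_of_nonneg (by positivity), mul_comm]
    exact tricomi_le_one_add_rpow_mul hp hq hz⟩

end Tricomi

/-- The function `t ↦ f (-t³/9)` for `t < 0` and `t ↦ e^{-t³/9} g (t³/9)` for `t ≥ 0`, where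
`f, g : [0, ∞) → ℝ`. Every self-similar profile below has this shape, with `f, g` solutions of
Kummer's equation. -/
def cubicGlue (f g : ℝ → ℝ) (t : ℝ) : ℝ :=
  if t < 0 then f (-(t ^ 3) / 9) else Real.exp (-(t ^ 3) / 9) * g (t ^ 3 / 9)

section CubicGlue

variable {f g : ℝ → ℝ} {t : ℝ}

theorem cubicGlue_of_neg (ht : t < 0) : cubicGlue f g t = f (-(t ^ 3) / 9) := if_pos ht

theorem cubicGlue_of_nonneg (ht : 0 ≤ t) :
    cubicGlue f g t = Real.exp (-(t ^ 3) / 9) * g (t ^ 3 / 9) := if_neg ht.not_gt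

theorem neg_pow_three_div_nine_pos (ht : t < 0) : 0 < -(t ^ 3) / 9 := by
  have : t ^ 3 < 0 := Odd.pow_neg (by decide) ht
  linarith

theorem hasDerivAt_cubicGlue_of_neg {f' : ℝ} (ht : t < 0) (hf : HasDerivAt f f' (-(t ^ 3) / 9)) :
    HasDerivAt (cubicGlue f g) (-(t ^ 2 / 3) * f') t := by
  have hcube : HasDerivAt (fun t : ℝ => -(t ^ 3) / 9) (-(t ^ 2 / 3)) t :=
    ((hasDerivAt_pow 3 t).neg.div_const 9).congr_deriv (by norm_num; ring)
  refine ((hf.comp t hcube).congr_of_eventuallyEq ?_).congr_deriv (mul_comm _ _)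
  filter_upwards [Iio_mem_nhds ht] with s hs using cubicGlue_of_neg hs

theorem hasDerivAt_cubicGlue_of_pos {g' : ℝ} (ht : 0 < t) (hg : HasDerivAt g g' (t ^ 3 / 9)) :
    HasDerivAt (cubicGlue f g)
      (t ^ 2 / 3 * (Real.exp (-(t ^ 3) / 9) * (g' - g (t ^ 3 / 9)))) t := by
  have hcube : HasDerivAt (fun t : ℝ => t ^ 3 / 9) (t ^ 2 / 3) t :=
    ((hasDerivAt_pow 3 t).div_const 9).congr_deriv (by norm_num; ring)
  have hexp : HasDerivAt (fun t : ℝ => Real.exp (-(t ^ 3) / 9))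
      (Real.exp (-(t ^ 3) / 9) * -(t ^ 2 / 3)) t := by
    simpa only [neg_div] using hcube.fun_neg.exp
  refine ((hexp.mul (hg.comp t hcube)).congr_of_eventuallyEq ?_).congr_deriv ?_
  · filter_upwards [Ioi_mem_nhds ht] with s hs using cubicGlue_of_nonneg (le_of_lt hs)
  · simp only [Function.comp_apply]
    ring

theorem continuousAt_cubicGlue_zero (hf : ContinuousWithinAt f (Ici 0) 0)
    (hg : ContinuousWithinAt g (Ici 0) 0) (h0 : f 0 = g 0) :
    ContinuousAt (cubicGlue f g) 0 := by
  have hval : cubicGlue f g 0 = f 0 := by simp [cubicGlue_of_nonneg, h0]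
  refine continuousAt_iff_continuous_left_right.2 ⟨?_, ?_⟩
  · have hcont : ContinuousWithinAt (fun t : ℝ => f (-(t ^ 3) / 9)) (Iic 0) 0 :=
      ContinuousWithinAt.comp (t := Ici 0) (by simpa using hf) (by fun_prop)
        fun t (ht : t ≤ 0) => by
        have : t ^ 3 ≤ 0 := Odd.pow_nonpos (by decide) ht
        simp only [mem_Ici]
        linarith
    refine hcont.congr (fun t (ht : t ≤ 0) => ?_) (by simp [hval])
    rcases ht.lt_or_eq with ht | rfl
    · exact cubicGlue_of_neg ht
    · simp [hval]
  · have hcont : ContinuousWithinAt (fun t : ℝ => g (t ^ 3 / 9)) (Ici 0) 0 :=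
      ContinuousWithinAt.comp (t := Ici 0) (by simpa using hg) (by fun_prop)
        fun t (ht : 0 ≤ t) => by
        simp only [mem_Ici]
        positivity
    have hexp : Continuous fun t : ℝ => Real.exp (-(t ^ 3) / 9) := by fun_prop
    exact (hexp.continuousWithinAt.mul hcont).congr (fun t ht => cubicGlue_of_nonneg ht)
      (cubicGlue_of_nonneg le_rfl)

theorem superpolynomialDecay_cubicGlue (hg : g =O[𝓟 (Ici 0)] fun _ => (1 : ℝ)) :
    SuperpolynomialDecay atTop id (cubicGlue f g) := by
  obtain ⟨C, hC⟩ := isBigO_principal.1 hg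
  have hexp : SuperpolynomialDecay atTop (id : ℝ → ℝ) fun t => Real.exp (-t) * C :=
    SuperpolynomialDecay.mul_const (fun n => Real.tendsto_pow_mul_exp_neg_atTop_nhds_zero n) C
  refine hexp.trans_eventually_abs_le ?_
  filter_upwards [eventually_ge_atTop 3] with t ht
  have hC0 := hC (t ^ 3 / 9) (by simp only [mem_Ici]; positivity)
  rw [norm_one, mul_one] at hC0
  have hcube : -(t ^ 3) / 9 ≤ -t := by
    nlinarith [mul_nonneg (by linarith : 0 ≤ t) (by nlinarith : 0 ≤ t ^ 2 - 9)]
  calc |cubicGlue f g t| = Real.exp (-(t ^ 3) / 9) * ‖g (t ^ 3 / 9)‖ := by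
        rw [cubicGlue_of_nonneg (by linarith), abs_mul, Real.abs_exp, Real.norm_eq_abs]
    _ ≤ Real.exp (-t) * C := by gcongr
    _ ≤ |Real.exp (-t) * C| := le_abs_self _

theorem isBigO_cubicGlue {α : ℝ} (hα : 0 ≤ α) (hf : f =O[𝓟 (Ici 0)] fun z => (1 + z) ^ α)
    (hg : g =O[𝓟 (Ici 0)] fun _ => (1 : ℝ)) :
    cubicGlue f g =O[⊤] fun t => (1 + |t|) ^ (3 * α) := by
  obtain ⟨A, hA0, hA⟩ := hf.exists_nonneg
  obtain ⟨B, hB0, hB⟩ := hg.exists_nonneg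
  rw [IsBigOWith, eventually_principal] at hA hB
  refine isBigO_top.2 ⟨A + B, fun t => ?_⟩
  have h1 : 1 ≤ (1 + |t|) ^ (3 * α) :=
    Real.one_le_rpow (le_add_of_nonneg_right (abs_nonneg t)) (by positivity)
  rw [Real.norm_of_nonneg (zero_le_one.trans h1)]
  rcases lt_or_ge t 0 with ht | ht
  · have hz := (neg_pow_three_div_nine_pos ht).le
    have hpow : (1 + -(t ^ 3) / 9) ^ α ≤ (1 + |t|) ^ (3 * α) := by
      rw [Real.rpow_mul (by positivity)]
      refine Real.rpow_le_rpow (by positivity) ?_ hα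
      rw [abs_of_neg ht]
      norm_cast
      nlinarith [pow_pos (neg_pos.2 ht) 3, pow_pos (neg_pos.2 ht) 2]
    rw [cubicGlue_of_neg ht]
    calc ‖f (-(t ^ 3) / 9)‖ ≤ A * ‖(1 + -(t ^ 3) / 9) ^ α‖ := hA _ hz
      _ = A * (1 + -(t ^ 3) / 9) ^ α := by rw [Real.norm_of_nonneg (by positivity)]
      _ ≤ (A + B) * (1 + |t|) ^ (3 * α) := by gcongr; linarith
  · have hexp : Real.exp (-(t ^ 3) / 9) ≤ 1 :=
      Real.exp_le_one_iff.2 (by rw [neg_div]; exact neg_nonpos.2 (by positivity))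
    rw [cubicGlue_of_nonneg ht, norm_mul, Real.norm_of_nonneg (Real.exp_nonneg _)]
    calc Real.exp (-(t ^ 3) / 9) * ‖g (t ^ 3 / 9)‖ ≤ 1 * (B * ‖(1 : ℝ)‖) := by
          gcongr
          exact hB _ (by simp only [mem_Ici]; positivity)
      _ = B * 1 := by simp
      _ ≤ (A + B) * (1 + |t|) ^ (3 * α) := by gcongr; linarith

end CubicGlue

theorem isOpen_Dinf : IsOpen Dinf := isOpen_Ioi.prod isOpen_univ

theorem mem_Dinf {p : P2} : p ∈ Dinf ↔ 0 < p.1 := by simp [Dinf]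

theorem pdv_congr {φ ψ : P2 → ℝ} (h : EqOn φ ψ Dinf) : EqOn (pdv φ) (pdv ψ) Dinf := fun p hp => by
  rw [pdv, pdv, (h.eventuallyEq_of_mem (isOpen_Dinf.mem_nhds hp)).fderiv_eq]

theorem pdx_congr {φ ψ : P2 → ℝ} (h : EqOn φ ψ Dinf) : EqOn (pdx φ) (pdx ψ) Dinf := fun p hp => by
  rw [pdx, pdx, (h.eventuallyEq_of_mem (isOpen_Dinf.mem_nhds hp)).fderiv_eq]

/-- The field `x ^ α * G (v / x^{1/3})`, homogeneous of degree `3α` under the kinetic scaling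
`(x, v) ↦ (λ³x, λv)`. -/
def selfSimilar (α : ℝ) (G : ℝ → ℝ) (p : P2) : ℝ := p.1 ^ α * G (p.2 * p.1 ^ (-(1 : ℝ) / 3))

/-- `G` solves `G'' + (t²/3) G' - α t G = 0`, written as a first order system for `(G, H)` with
`H = G'`. It is the equation for `selfSimilar α G` to solve `v ∂ₓφ = ∂ᵥᵥφ`. -/
structure IsProfile (α : ℝ) (G H : ℝ → ℝ) : Prop where
  deriv_fst : ∀ t, HasDerivAt G (H t) t
  deriv_snd : ∀ t, HasDerivAt H (α * t * G t - t ^ 2 / 3 * H t) t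

/-- The profile of `∂ₓ (selfSimilar α G)`, where `H = G'`. -/
def lowerProfile (α : ℝ) (G H : ℝ → ℝ) (t : ℝ) : ℝ := α * G t - t / 3 * H t

/-- For an exponent `α` profile `G` with `H = G'`, an exponent `α + 1` profile whose image under
`lowerProfile` is `(α + 1) (α + 2/3) G`. -/
def raiseProfile (α : ℝ) (G H : ℝ → ℝ) (t : ℝ) : ℝ := (α + 2 / 3 + t ^ 3 / 9) * G t + t / 3 * H t

section SelfSimilar

variable {α : ℝ} {G G' H : ℝ → ℝ} {p : P2}

theorem superpolynomialDecay_lowerProfile (hG : SuperpolynomialDecay atTop id G)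
    (hH : SuperpolynomialDecay atTop id H) : SuperpolynomialDecay atTop id (lowerProfile α G H) :=
  ((hG.const_mul α).add (hH.param_mul.const_mul (-(1 / 3)))).congr fun t => by
    simp only [lowerProfile, Pi.add_apply, Pi.mul_apply, id]
    ring

theorem superpolynomialDecay_raiseProfile (hG : SuperpolynomialDecay atTop id G)
    (hH : SuperpolynomialDecay atTop id H) : SuperpolynomialDecay atTop id (raiseProfile α G H) :=
  (((hG.const_mul (α + 2 / 3)).add ((hG.param_pow_mul 3).const_mul (1 / 9))).add
    (hH.param_mul.const_mul (1 / 3))).congr fun t => by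
      simp only [raiseProfile, Pi.add_apply, Pi.mul_apply, Pi.pow_apply, id]
      ring

theorem isBigO_pow_mul {r : ℝ} {m n : ℕ} (hmn : m ≤ n)
    (hG : G =O[⊤] fun t => (1 + |t|) ^ r) :
    (fun t => t ^ m * G t) =O[⊤] fun t => (1 + |t|) ^ (r + n) := by
  have hpow : (fun t : ℝ => t ^ m) =O[⊤] fun t => (1 + |t|) ^ n := by
    refine isBigO_top.2 ⟨1, fun t => ?_⟩
    have h0 := abs_nonneg t
    rw [one_mul, norm_pow, Real.norm_eq_abs, Real.norm_of_nonneg (by positivity)]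
    calc |t| ^ m ≤ (1 + |t|) ^ m := by gcongr; linarith
      _ ≤ (1 + |t|) ^ n := by gcongr; linarith
  refine (hpow.mul hG).congr_right fun t => ?_
  rw [Real.rpow_add_natCast (by positivity), mul_comm]

theorem isBigO_raiseProfile (hG : G =O[⊤] fun t => (1 + |t|) ^ (3 * α))
    (hH : H =O[⊤] fun t => (1 + |t|) ^ (3 * α)) :
    raiseProfile α G H =O[⊤] fun t => (1 + |t|) ^ (3 * (α + 1)) := by
  have h := (((isBigO_pow_mul (Nat.zero_le 3) hG).const_mul_left (α + 2 / 3)).add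
    ((isBigO_pow_mul le_rfl hG).const_mul_left (1 / 9))).add
    ((isBigO_pow_mul (by decide : 1 ≤ 3) hH).const_mul_left (1 / 3))
  refine (h.congr_left fun t => ?_).congr_right fun t => by norm_num [mul_add]
  simp only [raiseProfile]
  ring

theorem isBigO_deriv_raiseProfile (hG : G =O[⊤] fun t => (1 + |t|) ^ (3 * α))
    (hH : H =O[⊤] fun t => (1 + |t|) ^ (3 * α)) :
    (fun t => (α + 1) * (t ^ 2 / 3 * G t + H t)) =O[⊤] fun t => (1 + |t|) ^ (3 * (α + 1)) := by
  have h := ((isBigO_pow_mul (by decide : 2 ≤ 3) hG).const_mul_left ((α + 1) / 3)).add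
    ((isBigO_pow_mul (Nat.zero_le 3) hH).const_mul_left (α + 1))
  exact (h.congr_left fun t => by ring).congr_right fun t => by norm_num [mul_add]

theorem selfSimilar_sub (β : ℝ) (hp : p ∈ Dinf) :
    selfSimilar (α - β) G p = selfSimilar α G p * p.1 ^ (-β) := by
  rw [selfSimilar, selfSimilar, sub_eq_add_neg, Real.rpow_add (mem_Dinf.1 hp)]
  ring

theorem hasFDerivAt_selfSimilar (hG : ∀ t, HasDerivAt G (G' t) t) (hp : p ∈ Dinf) :
    HasFDerivAt (selfSimilar α G)
      (selfSimilar (α - 1) (lowerProfile α G G') p • ContinuousLinearMap.fst ℝ ℝ ℝ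
        + selfSimilar (α - 1 / 3) G' p • ContinuousLinearMap.snd ℝ ℝ ℝ) p := by
  have hx : 0 < p.1 := mem_Dinf.1 hp
  have hpow (β : ℝ) : HasFDerivAt (fun q : P2 => q.1 ^ β)
      ((β * p.1 ^ (β - 1)) • ContinuousLinearMap.fst ℝ ℝ ℝ) p :=
    hasFDerivAt_fst.rpow_const (Or.inl hx.ne')
  have hmul := (hpow α).mul ((hG _).comp_hasFDerivAt p (hasFDerivAt_snd.mul (hpow (-(1 : ℝ) / 3))))
  refine hmul.congr_fderiv ?_
  have h4 : p.1 ^ (-(1 : ℝ) / 3 - 1) = p.1 ^ (-(1 : ℝ) / 3) * p.1⁻¹ := by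
    rw [Real.rpow_sub_one hx.ne', div_eq_mul_inv]
  have hα1 : p.1 ^ (α - 1) = p.1 ^ α * p.1⁻¹ := by rw [Real.rpow_sub_one hx.ne', div_eq_mul_inv]
  have hα3 : p.1 ^ (α - 1 / 3) = p.1 ^ α * p.1 ^ (-(1 : ℝ) / 3) := by
    rw [← Real.rpow_add hx]
    ring_nf
  simp only [selfSimilar, lowerProfile, hα1, hα3]
  ext <;> simp [h4] <;> ring

theorem pdv_selfSimilar (hG : ∀ t, HasDerivAt G (G' t) t) :
    EqOn (pdv (selfSimilar α G)) (selfSimilar (α - 1 / 3) G') Dinf := fun p hp => by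
  simp [pdv, (hasFDerivAt_selfSimilar hG hp).fderiv]

theorem pdx_selfSimilar (hG : ∀ t, HasDerivAt G (G' t) t) :
    EqOn (pdx (selfSimilar α G)) (selfSimilar (α - 1) (lowerProfile α G G')) Dinf := fun p hp => by
  simp [pdx, (hasFDerivAt_selfSimilar hG hp).fderiv]

theorem contDiffOn_selfSimilar {n : WithTop ℕ∞} (hG : ContDiff ℝ n G) :
    ContDiffOn ℝ n (selfSimilar α G) Dinf := by
  have hpow (β : ℝ) : ContDiffOn ℝ n (fun p : P2 => p.1 ^ β) Dinf :=
    contDiff_fst.contDiffOn.rpow_const_of_ne fun p hp => (mem_Dinf.1 hp).ne'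
  exact (hpow α).mul (hG.comp_contDiffOn (contDiff_snd.contDiffOn.mul (hpow _)))

theorem tendsto_selfSimilar_nhdsGT_zero (hG : SuperpolynomialDecay atTop id G) {v : ℝ}
    (hv : 0 < v) : Tendsto (fun x => selfSimilar α G (x, v)) (𝓝[>] 0) (𝓝 0) := by
  have ht : Tendsto (fun x : ℝ => v * x ^ (-(1 : ℝ) / 3)) (𝓝[>] 0) atTop :=
    (tendsto_rpow_neg_nhdsGT_zero (by norm_num)).const_mul_atTop hv
  let n := ⌈-(3 * α)⌉₊
  have hdecay := (((superpolynomialDecay_iff_abs_tendsto_zero _ _ _).1 hG n).comp ht).const_mul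
    (v⁻¹ ^ n)
  rw [mul_zero] at hdecay
  refine squeeze_zero_norm' ?_ hdecay
  filter_upwards [Ioc_mem_nhdsGT one_pos] with x ⟨hx, hx1⟩
  have hpow : x ^ α ≤ (x ^ (-(1 : ℝ) / 3)) ^ n := by
    rw [← Real.rpow_mul_natCast hx.le]
    refine Real.rpow_le_rpow_of_exponent_ge hx hx1 ?_
    linarith [Nat.le_ceil (-(3 * α))]
  simp only [selfSimilar, Function.comp_apply, id, norm_mul, Real.norm_eq_abs, abs_mul, abs_pow]
  rw [abs_of_pos (Real.rpow_pos_of_pos hx α), abs_of_pos hv,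
    abs_of_pos (Real.rpow_pos_of_pos hx _), mul_pow, ← mul_assoc, ← mul_assoc, ← mul_pow,
    inv_mul_cancel₀ hv.ne', one_pow, one_mul]
  gcongr

theorem exists_abs_selfSimilar_le (hα : 0 ≤ α) (hG : G =O[⊤] fun t => (1 + |t|) ^ (3 * α))
    (R : ℝ) : ∃ C, ∀ p ∈ Dinf, ‖p‖ ≤ R → |selfSimilar α G p| ≤ C := by
  obtain ⟨C, hC0, hC⟩ := hG.exists_nonneg
  rw [IsBigOWith, eventually_top] at hC
  refine ⟨C * (R ^ (1 / 3 : ℝ) + R) ^ (3 * α), fun p hp hpR => ?_⟩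
  have hx : 0 < p.1 := mem_Dinf.1 hp
  have hxR : p.1 ≤ R := (le_abs_self _).trans ((norm_fst_le p).trans hpR)
  have hvR : |p.2| ≤ R := (norm_snd_le p).trans hpR
  let t := p.2 * p.1 ^ (-(1 : ℝ) / 3)
  have hscale : p.1 ^ α * (1 + |t|) ^ (3 * α) = (p.1 ^ (1 / 3 : ℝ) + |p.2|) ^ (3 * α) := by
    rw [show p.1 ^ α = (p.1 ^ (1 / 3 : ℝ)) ^ (3 * α) by rw [← Real.rpow_mul hx.le]; ring_nf,
      ← Real.mul_rpow (by positivity) (by positivity), abs_mul,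
      abs_of_pos (Real.rpow_pos_of_pos hx _), mul_add, mul_left_comm, ← Real.rpow_add hx]
    norm_num
  calc |selfSimilar α G p| = p.1 ^ α * ‖G t‖ := by
        rw [selfSimilar, abs_mul, abs_of_pos (Real.rpow_pos_of_pos hx α), Real.norm_eq_abs]
    _ ≤ p.1 ^ α * (C * ‖(1 + |t|) ^ (3 * α)‖) := by gcongr; exact hC t
    _ = C * (p.1 ^ (1 / 3 : ℝ) + |p.2|) ^ (3 * α) := by
        rw [Real.norm_of_nonneg (by positivity), ← hscale]
        ring
    _ ≤ C * (R ^ (1 / 3 : ℝ) + R) ^ (3 * α) := by gcongr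

theorem selfSimilar_cubicGlue {f g : ℝ → ℝ} {x : ℝ} (hx : 0 < x) (v : ℝ) :
    selfSimilar α (cubicGlue f g) (x, v) =
      if v < 0 then x ^ α * f (-(v ^ 3) / (9 * x))
      else x ^ α * (Real.exp (-(v ^ 3) / (9 * x)) * g (v ^ 3 / (9 * x))) := by
  have hcube : (v * x ^ (-(1 : ℝ) / 3)) ^ 3 = v ^ 3 / x := by
    rw [mul_pow, ← Real.rpow_mul_natCast hx.le]
    norm_num [Real.rpow_neg_one, div_eq_mul_inv]
  have hsign : v * x ^ (-(1 : ℝ) / 3) < 0 ↔ v < 0 :=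
    ⟨fun h => neg_of_mul_neg_left h (by positivity),
      fun h => mul_neg_of_neg_of_pos h (by positivity)⟩
  simp only [selfSimilar, cubicGlue, hsign, mul_ite, hcube, ← neg_div, div_div, mul_comm x 9]

end SelfSimilar

namespace IsProfile

variable {α : ℝ} {G H : ℝ → ℝ}

theorem contDiff_snd (h : IsProfile α G H) : ContDiff ℝ 1 H := by
  have hG : Continuous G := continuous_iff_continuousAt.2 fun t => (h.deriv_fst t).continuousAt
  have hH : Continuous H := continuous_iff_continuousAt.2 fun t => (h.deriv_snd t).continuousAt
  refine contDiff_one_iff_deriv.2 ⟨fun t => (h.deriv_snd t).differentiableAt, ?_⟩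
  rw [funext fun t => (h.deriv_snd t).deriv]
  fun_prop

theorem contDiff_fst (h : IsProfile α G H) : ContDiff ℝ 2 G := by
  rw [← one_add_one_eq_two, contDiff_succ_iff_deriv, funext fun t => (h.deriv_fst t).deriv]
  exact ⟨fun t => (h.deriv_fst t).differentiableAt, by simp, h.contDiff_snd⟩

theorem const_mul (h : IsProfile α G H) (c : ℝ) :
    IsProfile α (fun t => c * G t) (fun t => c * H t) where
  deriv_fst t := (h.deriv_fst t).const_mul c
  deriv_snd t := ((h.deriv_snd t).const_mul c).congr_deriv (by ring)

theorem lower (h : IsProfile α G H) :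
    IsProfile (α - 1) (lowerProfile α G H)
      (fun t => (α - 1 / 3) * H t - t / 3 * (α * t * G t - t ^ 2 / 3 * H t)) where
  deriv_fst t :=
    (((h.deriv_fst t).const_mul α).sub (((hasDerivAt_id t).div_const 3).mul (h.deriv_snd t)))
      |>.congr_deriv (by simp only [id]; ring)
  deriv_snd t :=
    (((h.deriv_snd t).const_mul (α - 1 / 3)).sub (((hasDerivAt_id t).div_const 3).mul
      ((((hasDerivAt_id t).const_mul α).mul (h.deriv_fst t)).sub
        (((hasDerivAt_pow 2 t).div_const 3).mul (h.deriv_snd t)))))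
      |>.congr_deriv (by simp only [lowerProfile, id, Pi.mul_apply, Pi.sub_apply]; norm_num; ring)

theorem raise (h : IsProfile α G H) :
    IsProfile (α + 1) (raiseProfile α G H)
      (fun t => (α + 1) * (t ^ 2 / 3 * G t + H t)) where
  deriv_fst t :=
    (((((hasDerivAt_pow 3 t).div_const 9).const_add (α + 2 / 3)).mul (h.deriv_fst t)).add
      (((hasDerivAt_id t).div_const 3).mul (h.deriv_snd t)))
      |>.congr_deriv (by simp only [id]; norm_num; ring)
  deriv_snd t :=
    (((((hasDerivAt_pow 2 t).div_const 3).mul (h.deriv_fst t)).add (h.deriv_snd t)).const_mul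
      (α + 1))
      |>.congr_deriv (by simp only [raiseProfile]; norm_num; ring)

theorem pde_selfSimilar (h : IsProfile α G H) {p : P2} (hp : p ∈ Dinf) :
    p.2 * pdx (selfSimilar α G) p = pdv (pdv (selfSimilar α G)) p := by
  have hx : 0 < p.1 := mem_Dinf.1 hp
  rw [pdx_selfSimilar h.deriv_fst hp, pdv_congr (pdv_selfSimilar h.deriv_fst) hp,
    pdv_selfSimilar h.deriv_snd hp]
  have hpow : p.1 ^ (α - 1) = p.1 ^ (α - 1 / 3 - 1 / 3) * p.1 ^ (-(1 : ℝ) / 3) := by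
    rw [← Real.rpow_add hx]
    ring_nf
  simp only [selfSimilar, lowerProfile, hpow]
  ring

end IsProfile

theorem U1_eq_tricomi {z : ℝ} (hz : 0 ≤ z) : U1 z = tricomi (5 / 6) (7 / 6) z := by
  rw [U1, tricomi_eq_laplace (by norm_num) (by norm_num) hz]
  norm_num

theorem U2_eq_tricomi : U2 = tricomi (-(1 / 6)) (1 / 6) := by
  ext z
  simp only [U2, tricomi, tricomiKernel]
  norm_num

theorem U3_eq_tricomi {z : ℝ} (hz : 0 ≤ z) : U3 z = tricomi (11 / 6) (13 / 6) z := by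
  rw [U3, tricomi_eq_laplace (by norm_num) (by norm_num) hz]
  norm_num

theorem tricomi_five_sixths {z : ℝ} (hz : 0 < z) :
    tricomi (5 / 6) (1 / 6) z =
      tricomi (5 / 6) (7 / 6) z + 5 / 6 * tricomi (11 / 6) (7 / 6) z := by
  have h := tricomi_eq_add_mul (p := 5 / 6) (q := 1 / 6) (by norm_num) hz
  norm_num at h
  exact h

theorem tricomi_neg_sixth {z : ℝ} (hz : 0 ≤ z) :
    tricomi (-(1 / 6)) (1 / 6) z =
      z * tricomi (5 / 6) (1 / 6) z + 1 / 6 * tricomi (5 / 6) (7 / 6) z := by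
  have h := tricomi_eq_mul_add (p := -(1 / 6)) (q := 1 / 6) (by norm_num) hz (by norm_num)
  norm_num at h ⊢
  exact h

theorem tricomi_five_sixths_seven_sixths {z : ℝ} (hz : 0 ≤ z) :
    tricomi (5 / 6) (7 / 6) z =
      z * tricomi (11 / 6) (7 / 6) z + 7 / 6 * tricomi (11 / 6) (13 / 6) z := by
  have h := tricomi_eq_mul_add (p := 5 / 6) (q := 7 / 6) (by norm_num) hz (by norm_num)
  norm_num at h ⊢
  exact h

/-- The constant `72^{-1/3}`, so that `(t³/9)^{1/3}` is `2 * kummerScale * t`. It is the factor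
between the derivative of the profile of `φ₀` and `-tricomi (1/6) (5/6)`. -/
def kummerScale : ℝ := (1 / 72) ^ (1 / 3 : ℝ)

theorem kummerScale_pow_three : kummerScale ^ 3 = 1 / 72 := by
  rw [kummerScale, ← Real.rpow_mul_natCast (by norm_num)]
  norm_num

theorem pow_three_div_nine_rpow {t : ℝ} (ht : 0 < t) (r : ℝ) :
    (t ^ 3 / 9) ^ r = (2 * kummerScale * t) ^ (3 * r) := by
  have hκ : 0 < kummerScale := Real.rpow_pos_of_pos (by norm_num) _
  rw [show t ^ 3 / 9 = (2 * kummerScale * t) ^ 3 by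
    rw [mul_pow, mul_pow, kummerScale_pow_three]; ring, Real.rpow_mul (by positivity)]
  norm_cast

theorem kummerScale_mul_tricomi {t : ℝ} (ht : 0 < t) :
    kummerScale * tricomi (1 / 6) (5 / 6) (t ^ 3 / 9) =
      t ^ 2 / 18 * tricomi (5 / 6) (1 / 6) (t ^ 3 / 9) := by
  rw [tricomi_swap (by norm_num) (by norm_num) (by positivity), pow_three_div_nine_rpow ht,
    show (3 : ℝ) * (5 / 6 - 1 / 6) = (2 : ℕ) by norm_num, Real.rpow_natCast]
  linear_combination 4 * t ^ 2 * tricomi (5 / 6) (1 / 6) (t ^ 3 / 9) * kummerScale_pow_three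

theorem mul_kummerScale_mul_tricomi {t : ℝ} (ht : 0 ≤ t) :
    t * (kummerScale * tricomi (1 / 6) (5 / 6) (t ^ 3 / 9)) =
      1 / 2 * (t ^ 3 / 9 * tricomi (5 / 6) (1 / 6) (t ^ 3 / 9)) := by
  rcases ht.eq_or_lt with rfl | ht
  · simp
  · rw [kummerScale_mul_tricomi ht]
    ring

theorem tricomi_eq_kummerScale_mul {t : ℝ} (ht : 0 < t) :
    tricomi (5 / 6) (7 / 6) (t ^ 3 / 9) =
      2 * kummerScale * t * tricomi (7 / 6) (5 / 6) (t ^ 3 / 9) := by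
  rw [tricomi_swap (by norm_num) (by norm_num) (by positivity), pow_three_div_nine_rpow ht,
    show (3 : ℝ) * (7 / 6 - 5 / 6) = 1 by norm_num, Real.rpow_one]

/-- The profile of `φ₀`, of exponent `1/6`. -/
def phi0Profile : ℝ → ℝ :=
  cubicGlue (tricomi (-(1 / 6)) (1 / 6)) fun z => 1 / 6 * tricomi (5 / 6) (7 / 6) z

/-- The derivative of `phi0Profile`. -/
def phi0ProfileDeriv : ℝ → ℝ :=
  cubicGlue (fun z => -kummerScale * tricomi (1 / 6) (5 / 6) z)
    fun z => -kummerScale * tricomi (1 / 6) (5 / 6) z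

theorem continuousAt_phi0Profile_zero : ContinuousAt phi0Profile 0 :=
  continuousAt_cubicGlue_zero (continuousWithinAt_tricomi_zero (by norm_num) (by norm_num))
    ((continuousWithinAt_tricomi_zero (by norm_num) (by norm_num)).const_mul _)
    (by rw [tricomi_neg_sixth le_rfl, zero_mul, zero_add])

theorem continuousAt_phi0ProfileDeriv_zero : ContinuousAt phi0ProfileDeriv 0 :=
  have h := (continuousWithinAt_tricomi_zero (p := 1 / 6) (q := 5 / 6) (by norm_num)
    (by norm_num)).const_mul (-kummerScale)
  continuousAt_cubicGlue_zero h h rfl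

theorem hasDerivAt_phi0Profile_of_ne {t : ℝ} (ht : t ≠ 0) :
    HasDerivAt phi0Profile (phi0ProfileDeriv t) t := by
  rcases ht.lt_or_gt with ht | ht
  · have hz := neg_pow_three_div_nine_pos ht
    refine (hasDerivAt_cubicGlue_of_neg ht (hasDerivAt_tricomi (by norm_num) hz)).congr_deriv ?_
    have hswap := kummerScale_mul_tricomi (neg_pos.2 ht)
    rw [Odd.neg_pow (by decide)] at hswap
    rw [phi0ProfileDeriv, cubicGlue_of_neg ht, show -(1 / 6) + 1 = (5 / 6 : ℝ) by norm_num]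
    linear_combination hswap
  · have hz : 0 < t ^ 3 / 9 := by positivity
    refine (hasDerivAt_cubicGlue_of_pos ht
      ((hasDerivAt_tricomi (by norm_num) hz).const_mul _)).congr_deriv ?_
    have hswap := kummerScale_mul_tricomi ht
    rw [tricomi_five_sixths hz] at hswap
    rw [phi0ProfileDeriv, cubicGlue_of_nonneg ht.le, show 5 / 6 + 1 = (11 / 6 : ℝ) by norm_num]
    linear_combination Real.exp (-(t ^ 3) / 9) * hswap

theorem hasDerivAt_phi0ProfileDeriv_of_ne {t : ℝ} (ht : t ≠ 0) :
    HasDerivAt phi0ProfileDeriv (1 / 6 * t * phi0Profile t - t ^ 2 / 3 * phi0ProfileDeriv t) t := by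
  rcases ht.lt_or_gt with ht | ht
  · have hz := neg_pow_three_div_nine_pos ht
    refine (hasDerivAt_cubicGlue_of_neg ht
      ((hasDerivAt_tricomi (by norm_num) hz).const_mul _)).congr_deriv ?_
    have hswap := kummerScale_mul_tricomi (neg_pos.2 ht)
    have hswap' := tricomi_eq_kummerScale_mul (neg_pos.2 ht)
    rw [Odd.neg_pow (by decide)] at hswap hswap'
    rw [phi0Profile, phi0ProfileDeriv, cubicGlue_of_neg ht, cubicGlue_of_neg ht,
      tricomi_neg_sixth hz.le, show 1 / 6 + 1 = (7 / 6 : ℝ) by norm_num]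
    linear_combination -t ^ 2 / 3 * hswap - t / 36 * hswap'
  · have hz : 0 < t ^ 3 / 9 := by positivity
    refine (hasDerivAt_cubicGlue_of_pos ht
      ((hasDerivAt_tricomi (by norm_num) hz).const_mul _)).congr_deriv ?_
    rw [phi0Profile, phi0ProfileDeriv, cubicGlue_of_nonneg ht.le, cubicGlue_of_nonneg ht.le,
      tricomi_eq_kummerScale_mul ht, show 1 / 6 + 1 = (7 / 6 : ℝ) by norm_num]
    ring

theorem isProfile_phi0Profile : IsProfile (1 / 6) phi0Profile phi0ProfileDeriv where
  deriv_fst t := by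
    rcases eq_or_ne t 0 with rfl | ht
    · exact hasDerivAt_of_hasDerivAt_of_ne (fun s hs => hasDerivAt_phi0Profile_of_ne hs)
        continuousAt_phi0Profile_zero continuousAt_phi0ProfileDeriv_zero
    · exact hasDerivAt_phi0Profile_of_ne ht
  deriv_snd t := by
    rcases eq_or_ne t 0 with rfl | ht
    · have hG := continuousAt_phi0Profile_zero
      have hH := continuousAt_phi0ProfileDeriv_zero
      exact hasDerivAt_of_hasDerivAt_of_ne
        (g := fun t => 1 / 6 * t * phi0Profile t - t ^ 2 / 3 * phi0ProfileDeriv t)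
        (fun s hs => hasDerivAt_phi0ProfileDeriv_of_ne hs) hH (by fun_prop)
    · exact hasDerivAt_phi0ProfileDeriv_of_ne ht

theorem superpolynomialDecay_phi0Profile : SuperpolynomialDecay atTop id phi0Profile :=
  superpolynomialDecay_cubicGlue
    ((isBigO_tricomi_one (by norm_num) (by norm_num)).const_mul_left _)

theorem superpolynomialDecay_phi0ProfileDeriv : SuperpolynomialDecay atTop id phi0ProfileDeriv :=
  superpolynomialDecay_cubicGlue
    ((isBigO_tricomi_one (by norm_num) (by norm_num)).const_mul_left _)

theorem isBigO_phi0Profile : phi0Profile =O[⊤] fun t => (1 + |t|) ^ (3 * (1 / 6) : ℝ) := by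
  refine isBigO_cubicGlue (by norm_num) ?_
    ((isBigO_tricomi_one (by norm_num) (by norm_num)).const_mul_left _)
  simpa only [neg_neg] using isBigO_tricomi_rpow (p := -(1 / 6)) (by norm_num) (by norm_num)

theorem isBigO_phi0ProfileDeriv :
    phi0ProfileDeriv =O[⊤] fun t => (1 + |t|) ^ (3 * (1 / 6) : ℝ) := by
  have hbdd : (fun z => -kummerScale * tricomi (1 / 6) (5 / 6) z) =O[𝓟 (Ici 0)] fun _ => (1 : ℝ) :=
    (isBigO_tricomi_one (by norm_num) (by norm_num)).const_mul_left _
  refine isBigO_cubicGlue (by norm_num) (hbdd.trans (isBigO_principal.2 ⟨1, ?_⟩)) hbdd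
  intro z (hz : 0 ≤ z)
  rw [one_mul, norm_one, Real.norm_of_nonneg (by positivity)]
  exact Real.one_le_rpow (by linarith) (by norm_num)

theorem lowerProfile_phi0Profile (t : ℝ) :
    36 * lowerProfile (1 / 6) phi0Profile phi0ProfileDeriv t =
      cubicGlue U1 (fun z => 6 * U2 z) t := by
  rw [lowerProfile, phi0Profile, phi0ProfileDeriv]
  rcases lt_or_ge t 0 with ht | ht
  · have hz := neg_pow_three_div_nine_pos ht
    have hswap := mul_kummerScale_mul_tricomi (neg_nonneg.2 ht.le)
    rw [Odd.neg_pow (by decide)] at hswap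
    simp only [cubicGlue_of_neg ht, U1_eq_tricomi hz.le, tricomi_neg_sixth hz.le]
    linear_combination -12 * hswap
  · have hz : 0 ≤ t ^ 3 / 9 := by positivity
    have hswap := mul_kummerScale_mul_tricomi ht
    simp only [cubicGlue_of_nonneg ht, U2_eq_tricomi, tricomi_neg_sixth hz]
    linear_combination 12 * Real.exp (-(t ^ 3) / 9) * hswap

theorem raiseProfile_phi0Profile (t : ℝ) :
    raiseProfile (1 / 6) phi0Profile phi0ProfileDeriv t =
      cubicGlue (fun z => -U4 z) (fun z => 35 / 216 * U3 z) t := by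
  rw [raiseProfile, phi0Profile, phi0ProfileDeriv]
  rcases lt_or_ge t 0 with ht | ht
  · have hz := neg_pow_three_div_nine_pos ht
    have hswap := mul_kummerScale_mul_tricomi (neg_nonneg.2 ht.le)
    rw [Odd.neg_pow (by decide)] at hswap
    simp only [cubicGlue_of_neg ht, U4, U1_eq_tricomi hz.le, U2_eq_tricomi,
      tricomi_neg_sixth hz.le]
    linear_combination 1 / 3 * hswap
  · have hz : 0 ≤ t ^ 3 / 9 := by positivity
    have hswap := mul_kummerScale_mul_tricomi ht
    have hparts : t ^ 3 / 9 * tricomi (5 / 6) (1 / 6) (t ^ 3 / 9) = t ^ 3 / 9 *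
        (tricomi (5 / 6) (7 / 6) (t ^ 3 / 9) + 5 / 6 * tricomi (11 / 6) (7 / 6) (t ^ 3 / 9)) := by
      rcases hz.eq_or_lt with h0 | hz
      · simp [← h0]
      · rw [tricomi_five_sixths hz]
    simp only [cubicGlue_of_nonneg ht, U3_eq_tricomi hz]
    linear_combination Real.exp (-(t ^ 3) / 9) * (5 / 36 * tricomi_five_sixths_seven_sixths hz
      - 1 / 3 * hswap - 1 / 6 * hparts)

theorem Gamma_seven_sixths : Real.Gamma (7 / 6) = 1 / 6 * Real.Gamma (1 / 6) := by
  rw [← Real.Gamma_add_one (by norm_num)]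
  norm_num

theorem Gamma_thirteen_sixths : Real.Gamma (13 / 6) = 7 / 36 * Real.Gamma (1 / 6) := by
  have h := Real.Gamma_add_one (by norm_num : (7 / 6 : ℝ) ≠ 0)
  rw [Gamma_seven_sixths] at h
  norm_num at h ⊢
  linarith

theorem eqOn_phi0_selfSimilar :
    EqOn (fun p : P2 => phi0 p.1 p.2) (selfSimilar (1 / 6) phi0Profile) Dinf := by
  rintro ⟨x, v⟩ hp
  have hx : 0 < x := mem_Dinf.1 hp
  rw [phi0Profile, selfSimilar_cubicGlue hx]
  simp only [phi0]
  split_ifs with hv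
  · rw [U2_eq_tricomi]
  · have hz : 0 ≤ v ^ 3 / (9 * x) := by
      have := not_lt.1 hv
      positivity
    have hΓ : Real.Gamma (1 / 6) ≠ 0 := by positivity
    rw [Gamma_seven_sixths, mul_div_cancel_right₀ _ hΓ, U1_eq_tricomi hz]
    ring

theorem eqOn_phim1_selfSimilar :
    EqOn (fun p : P2 => phim1 p.1 p.2)
      (selfSimilar (1 / 6 - 1) fun t => 36 * lowerProfile (1 / 6) phi0Profile phi0ProfileDeriv t)
      Dinf := by
  rintro ⟨x, v⟩ hp
  have hx : 0 < x := mem_Dinf.1 hp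
  have hΓ : Real.Gamma (1 / 6) ≠ 0 := by positivity
  rw [funext lowerProfile_phi0Profile, selfSimilar_cubicGlue hx]
  simp only [phim1, Gamma_seven_sixths]
  norm_num
  congr 1
  field_simp

theorem eqOn_phi1_selfSimilar :
    EqOn (fun p : P2 => phi1 p.1 p.2)
      (selfSimilar (1 / 6 + 1) (raiseProfile (1 / 6) phi0Profile phi0ProfileDeriv)) Dinf := by
  rintro ⟨x, v⟩ hp
  have hx : 0 < x := mem_Dinf.1 hp
  have hΓ : Real.Gamma (1 / 6) ≠ 0 := by positivity
  rw [funext raiseProfile_phi0Profile, selfSimilar_cubicGlue hx]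
  simp only [phi1, Gamma_thirteen_sixths]
  norm_num
  congr 1
  field_simp
  ring

/-- `φ` is a classical solution of `v ∂ₓφ = ∂ᵥᵥφ` on the half-plane whose trace on the incoming
boundary `{0} × (0, ∞)`, taken pointwise along `x → 0⁺`, vanishes. -/
def IsClassicalSolZero (φ : P2 → ℝ) : Prop :=
  ContDiffOn ℝ 2 φ Dinf ∧ (∀ p ∈ Dinf, p.2 * pdx φ p = pdv (pdv φ) p) ∧
    ∀ v, 0 < v → Tendsto (fun x => φ (x, v)) (𝓝[>] 0) (𝓝 0)

section WeakSolution

variable {φ ψ F G f g : P2 → ℝ} {β : ℝ}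

theorem continuousOn_pdv {D : Set P2} (hD : IsOpen D) (hf : ContDiffOn ℝ 1 f D) :
    ContinuousOn (pdv f) D :=
  (hf.continuousOn_fderiv_of_isOpen hD le_rfl).clm_apply continuousOn_const

theorem continuousOn_pdx {D : Set P2} (hD : IsOpen D) (hf : ContDiffOn ℝ 1 f D) :
    ContinuousOn (pdx f) D :=
  (hf.continuousOn_fderiv_of_isOpen hD le_rfl).clm_apply continuousOn_const

theorem continuous_pdv (hf : ContDiff ℝ 1 f) : Continuous (pdv f) :=
  (hf.continuous_fderiv one_ne_zero).clm_apply continuous_const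

theorem continuous_pdx (hf : ContDiff ℝ 1 f) : Continuous (pdx f) :=
  (hf.continuous_fderiv one_ne_zero).clm_apply continuous_const

theorem contDiffOn_pdv {n : WithTop ℕ∞} {D : Set P2} (hD : IsOpen D)
    (hf : ContDiffOn ℝ (n + 1) f D) : ContDiffOn ℝ n (pdv f) D :=
  (hf.fderiv_of_isOpen hD le_rfl).clm_apply contDiffOn_const

theorem integrable_mul_of_tsupport_subset {D : Set P2} (hf : ContinuousOn f D)
    (hg : Continuous g) (hgc : HasCompactSupport g) (hgD : tsupport g ⊆ D) :
    Integrable fun p => f p * g p := by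
  refine (integrableOn_iff_integrable_of_support_subset (s := tsupport g) fun p hp => ?_).1
    (((hf.mono hgD).mul hg.continuousOn).integrableOn_compact hgc)
  exact subset_tsupport g (right_ne_zero_of_mul hp)

theorem isWeakVDeriv_pdv {D : Set P2} (hD : IsOpen D) (hφ : ContDiffOn ℝ 1 φ D) :
    IsWeakVDeriv D φ (pdv φ) := by
  intro ψ hψ hc hs
  have hψ1 : ContDiff ℝ 1 ψ := hψ.of_le (by exact_mod_cast le_top)
  have hs' : tsupport (pdv ψ) ⊆ tsupport ψ := tsupport_fderiv_apply_subset ℝ _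
  have hparts := integral_bilinear_hasLineDerivAt_right_eq_neg_left_of_integrable (μ := volume)
    (B := ContinuousLinearMap.mul ℝ ℝ) (v := ((0 : ℝ), (1 : ℝ))) (f := φ) (f' := pdv φ)
    (g := ψ) (g' := pdv ψ)
    (integrable_mul_of_tsupport_subset (continuousOn_pdv hD hφ) hψ.continuous hc hs)
    (integrable_mul_of_tsupport_subset hφ.continuousOn (continuous_pdv hψ1)
      (hc.fderiv_apply ℝ _) (hs'.trans hs))
    (integrable_mul_of_tsupport_subset hφ.continuousOn hψ.continuous hc hs)
    (fun p hp => ((hφ.contDiffAt (hD.mem_nhds (hs hp))).differentiableAt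
      one_ne_zero).hasFDerivAt.hasLineDerivAt _)
    (fun p _ => (hψ1.differentiable one_ne_zero p).hasFDerivAt.hasLineDerivAt _)
  simp only [ContinuousLinearMap.mul_apply'] at hparts
  change ∫ p in D, φ p * pdv ψ p = _
  rw [setIntegral_eq_integral_of_forall_compl_eq_zero,
    setIntegral_eq_integral_of_forall_compl_eq_zero, hparts]
  · exact fun p hp => by rw [image_eq_zero_of_notMem_tsupport fun h => hp (hs h), mul_zero]
  · exact fun p hp => by
      rw [image_eq_zero_of_notMem_tsupport fun h => hp (hs (hs' h)), mul_zero]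

theorem integrableOn_rpow_fst (hβ : -1 < β) (C R : ℝ) :
    IntegrableOn (fun p : P2 => C * p.1 ^ β) (Ioc 0 R ×ˢ Icc (-R) R) := by
  have hx : IntegrableOn (fun x : ℝ => C * x ^ β) (Ioc 0 R) := by
    rcases le_or_gt 0 R with hR | hR
    · exact ((intervalIntegrable_iff_integrableOn_Ioc_of_le hR).1
        (intervalIntegral.intervalIntegrable_rpow' hβ)).const_mul C
    · simp [Ioc_eq_empty hR.not_gt]
  rw [IntegrableOn, Measure.volume_eq_prod, ← Measure.prod_restrict]
  exact hx.comp_fst _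

theorem integrableOn_mul_of_abs_le_rpow (hβ : -1 < β) (hf : ContinuousOn f Dinf)
    (hb : ∀ R, ∃ C, ∀ p ∈ Dinf, ‖p‖ ≤ R → |f p| ≤ C * p.1 ^ β)
    (hg : Continuous g) (hgc : HasCompactSupport g) :
    IntegrableOn (fun p => f p * g p) Dinf := by
  obtain ⟨R, -, hR⟩ := hgc.exists_pos_le_norm
  obtain ⟨M, hM⟩ := hgc.exists_bound_of_continuous hg
  obtain ⟨C, hC⟩ := hb R
  have hbox : MeasurableSet (Ioc 0 R ×ˢ Icc (-R) R : Set P2) :=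
    measurableSet_Ioc.prod measurableSet_Icc
  have hsub : (Ioc 0 R ×ˢ Icc (-R) R : Set P2) ⊆ Dinf := fun p hp => mem_Dinf.2 hp.1.1
  have hfint : IntegrableOn f (Ioc 0 R ×ˢ Icc (-R) R) := by
    refine (integrableOn_rpow_fst hβ C R).mono' ((hf.mono hsub).aestronglyMeasurable hbox)
      ((ae_restrict_mem hbox).mono fun p hp => hC p (hsub hp) ?_)
    exact max_le ((abs_of_pos hp.1.1).trans_le hp.1.2) (abs_le.2 hp.2)
  have hmul := hfint.mul_bdd hg.aestronglyMeasurable (Eventually.of_forall hM)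
  refine IntegrableOn.of_forall_sdiff_eq_zero hmul isOpen_Dinf.measurableSet fun p hp => ?_
  rw [hR p, mul_zero]
  by_contra! hpR
  exact hp.2 ⟨⟨mem_Dinf.1 hp.1, (le_abs_self _).trans ((norm_fst_le p).trans hpR.le)⟩,
    abs_le.1 ((norm_snd_le p).trans hpR.le)⟩

theorem setIntegral_Icc_pdx_add_pdv (hF : ContDiffOn ℝ 1 F Dinf) (hG : ContDiffOn ℝ 1 G Dinf)
    {ε R : ℝ} (hε : 0 < ε) (hR : ε ≤ R) (hF0 : ∀ p : P2, R ≤ ‖p‖ → F p = 0)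
    (hG0 : ∀ p : P2, R ≤ ‖p‖ → G p = 0) :
    ∫ p in Icc (ε, -R) (R, R), (pdx F p + pdv G p) = -∫ v in -R..R, F (ε, v) := by
  have hR0 : |R| = R := abs_of_pos (hε.trans_le hR)
  have hbox : Icc (ε, -R) (R, R) ⊆ Dinf := fun p hp => mem_Dinf.2 (hε.trans_le hp.1.1)
  have hdiff {f : P2 → ℝ} (hf : ContDiffOn ℝ 1 f Dinf) :
      ∀ p ∈ Ioo ε R ×ˢ Ioo (-R) R, HasFDerivAt f (fderiv ℝ f p) p := fun p hp =>
    ((hf.contDiffAt (isOpen_Dinf.mem_nhds (mem_Dinf.2 (hε.trans hp.1.1)))).differentiableAt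
      one_ne_zero).hasFDerivAt
  have hdiv := integral_divergence_prod_Icc_of_hasFDerivAt_of_le F G (fderiv ℝ F) (fderiv ℝ G)
    (ε, -R) (R, R) ⟨hR, by linarith⟩ (hF.continuousOn.mono hbox)
    (hG.continuousOn.mono hbox) (hdiff hF) (hdiff hG)
    (((continuousOn_pdx isOpen_Dinf hF).add (continuousOn_pdv isOpen_Dinf hG)).mono
      hbox |>.integrableOn_compact isCompact_Icc)
  have htop (x : ℝ) : G (x, R) = 0 := hG0 _ (hR0.ge.trans (norm_snd_le (x, R)))
  have hbot (x : ℝ) : G (x, -R) = 0 :=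
    hG0 _ ((hR0.ge.trans (abs_neg R).ge).trans (norm_snd_le (x, -R)))
  have hright (v : ℝ) : F (R, v) = 0 := hF0 _ (hR0.ge.trans (norm_fst_le (R, v)))
  simp only [htop, hbot, hright, intervalIntegral.integral_zero, sub_zero, add_zero,
    zero_sub] at hdiv
  exact hdiv

theorem setIntegral_pdx_add_pdv (hF : ContDiffOn ℝ 1 F Dinf) (hG : ContDiffOn ℝ 1 G Dinf)
    (hFc : HasCompactSupport F) (hGc : HasCompactSupport G) {ε : ℝ} (hε : 0 < ε) :
    ∫ p in Ici ε ×ˢ univ, (pdx F p + pdv G p) = -∫ v, F (ε, v) := by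
  obtain ⟨R, hRε, hR⟩ : ∃ R ≥ ε, ∀ p ∈ tsupport F ∪ tsupport G, ‖p‖ < R := by
    obtain ⟨R, hR⟩ := (hFc.isCompact.union hGc.isCompact).isBounded.exists_norm_le
    exact ⟨max R ε + 1, by linarith [le_max_right R ε],
      fun p hp => (hR p hp).trans_lt (by linarith [le_max_left R ε])⟩
  have hF0 (p : P2) (hp : R ≤ ‖p‖) : p ∉ tsupport F := fun h => hp.not_gt (hR p (Or.inl h))
  have hG0 (p : P2) (hp : R ≤ ‖p‖) : p ∉ tsupport G := fun h => hp.not_gt (hR p (Or.inr h))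
  have hF0' (p : P2) (hp : R ≤ ‖p‖) : F p = 0 := image_eq_zero_of_notMem_tsupport (hF0 p hp)
  have hbox : Icc (ε, -R) (R, R) ⊆ Ici ε ×ˢ univ := fun p hp => ⟨hp.1.1, mem_univ _⟩
  have hline : ∫ v, F (ε, v) = ∫ v in -R..R, F (ε, v) := by
    rw [intervalIntegral.integral_of_le (by linarith),
      setIntegral_eq_integral_of_forall_compl_eq_zero]
    intro v hv
    refine hF0' _ (le_trans ?_ (norm_snd_le (ε, v)))
    by_contra! hvR
    exact hv (Ioo_subset_Ioc_self (abs_lt.1 hvR))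
  rw [hline, ← setIntegral_Icc_pdx_add_pdv hF hG hε hRε hF0'
    fun p hp => image_eq_zero_of_notMem_tsupport (hG0 p hp)]
  refine setIntegral_eq_of_subset_of_forall_sdiff_eq_zero
    (measurableSet_Ici.prod MeasurableSet.univ) hbox fun p hp => ?_
  have hpR : R ≤ ‖p‖ := by
    by_contra! hpR
    have h2 := abs_lt.1 ((norm_snd_le p).trans_lt hpR)
    exact hp.2 ⟨⟨hp.1.1, h2.1.le⟩, (le_abs_self _).trans ((norm_fst_le p).trans hpR.le), h2.2.le⟩
  simp [pdx, pdv, fderiv_of_notMem_tsupport ℝ (hF0 p hpR),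
    fderiv_of_notMem_tsupport ℝ (hG0 p hpR)]

theorem setIntegral_weakForm_Ici (hφ : ContDiffOn ℝ 2 φ Dinf)
    (hpde : ∀ p ∈ Dinf, p.2 * pdx φ p = pdv (pdv φ) p) (hψ : ContDiff ℝ 1 ψ)
    (hc : HasCompactSupport ψ) {ε : ℝ} (hε : 0 < ε) :
    ∫ p in Ici ε ×ˢ univ, (pdv φ p * pdv ψ p - φ p * (p.2 * pdx ψ p)) =
      ∫ v, v * φ (ε, v) * ψ (ε, v) := by
  have hφ1 : ContDiffOn ℝ 1 φ Dinf := hφ.of_le one_le_two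
  have hφv : ContDiffOn ℝ 1 (pdv φ) Dinf :=
    contDiffOn_pdv isOpen_Dinf (by rwa [one_add_one_eq_two])
  have hflux := setIntegral_pdx_add_pdv (F := fun p => p.2 * φ p * ψ p)
    (G := fun p => -pdv φ p * ψ p) ((contDiffOn_snd.mul hφ1).mul hψ.contDiffOn)
    (hφv.neg.mul hψ.contDiffOn) hc.mul_left hc.mul_left hε
  rw [← neg_eq_iff_eq_neg, ← integral_neg] at hflux
  rw [← hflux]
  refine setIntegral_congr_fun (measurableSet_Ici.prod MeasurableSet.univ) fun p hp => ?_
  have hpD : p ∈ Dinf := mem_Dinf.2 (hε.trans_le hp.1)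
  have hdiff {f : P2 → ℝ} (hf : ContDiffOn ℝ 1 f Dinf) : HasFDerivAt f (fderiv ℝ f p) p :=
    ((hf.contDiffAt (isOpen_Dinf.mem_nhds hpD)).differentiableAt one_ne_zero).hasFDerivAt
  have hψ' := hdiff hψ.contDiffOn
  have hF := (((hasFDerivAt_snd (p := p)).mul (hdiff hφ1)).mul hψ').fderiv
  have hG := ((hdiff hφv).neg.mul hψ').fderiv
  have hx : pdx (fun p => p.2 * φ p * ψ p) p = p.2 * φ p * pdx ψ p + ψ p * (p.2 * pdx φ p) := by
    change fderiv ℝ _ p _ = _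
    refine (congrArg (fun L => L ((1 : ℝ), (0 : ℝ))) hF).trans ?_
    simp [pdx]
  have hv : pdv (fun p => -pdv φ p * ψ p) p = -pdv φ p * pdv ψ p - ψ p * pdv (pdv φ) p := by
    refine (congrArg (fun L => L ((0 : ℝ), (1 : ℝ))) hG).trans ?_
    simp [pdv]
    ring
  simp only [hx, hv, hpde p hpD]
  ring

theorem norm_mul_mul_le_indicator {R C M ε : ℝ} (hR : 0 < R) (hR0 : ∀ p, R ≤ ‖p‖ → ψ p = 0)
    (hC : ∀ p ∈ Dinf, ‖p‖ ≤ R → |φ p| ≤ C) (hM : ∀ p, ‖ψ p‖ ≤ M) (hε : 0 < ε) (v : ℝ) :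
    ‖v * φ (ε, v) * ψ (ε, v)‖ ≤ (Icc (-R) R).indicator (fun _ => R * |C| * M) v := by
  have hM0 : 0 ≤ M := (norm_nonneg _).trans (hM 0)
  rcases le_or_gt R ‖(ε, v)‖ with hp | hp
  · rw [hR0 _ hp, mul_zero, norm_zero]
    exact indicator_nonneg (fun _ _ => by positivity) v
  · have hv : |v| ≤ R := (norm_snd_le (ε, v)).trans hp.le
    have hmem : v ∈ Icc (-R) R := abs_le.1 hv
    rw [indicator_of_mem hmem, norm_mul, norm_mul]
    gcongr
    · exact hv
    · exact (hC (ε, v) (mem_Dinf.2 hε) hp.le).trans (le_abs_self C)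
    · exact hM _

theorem tendsto_integral_trace (hφ : ContinuousOn φ Dinf)
    (hb : ∀ R, ∃ C, ∀ p ∈ Dinf, ‖p‖ ≤ R → |φ p| ≤ C)
    (htr : ∀ v, 0 < v → Tendsto (fun x => φ (x, v)) (𝓝[>] 0) (𝓝 0))
    (hψ : Continuous ψ) (hc : HasCompactSupport ψ) (hψ0 : ∀ v < 0, ψ (0, v) = 0) :
    Tendsto (fun ε => ∫ v, v * φ (ε, v) * ψ (ε, v)) (𝓝[>] 0) (𝓝 0) := by
  obtain ⟨R, hR0, hR⟩ := hc.exists_pos_le_norm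
  obtain ⟨C, hC⟩ := hb R
  obtain ⟨M, hM⟩ := hc.exists_bound_of_continuous hψ
  have hψlim (v : ℝ) : Tendsto (fun x => ψ (x, v)) (𝓝[>] 0) (𝓝 (ψ (0, v))) :=
    ((by fun_prop : Continuous fun x => ψ (x, v)).tendsto 0).mono_left nhdsWithin_le_nhds
  have hlim (v : ℝ) : Tendsto (fun x => v * φ (x, v) * ψ (x, v)) (𝓝[>] 0) (𝓝 0) := by
    rcases lt_trichotomy v 0 with hv | rfl | hv
    · obtain ⟨K, hK⟩ := hb (max 1 |v|)
      refine bdd_le_mul_tendsto_zero' (|v| * K) ?_ (by simpa only [hψ0 v hv] using hψlim v)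
      filter_upwards [Ioc_mem_nhdsGT one_pos] with x ⟨hx, hx1⟩
      rw [abs_mul]
      gcongr
      exact hK _ (mem_Dinf.2 hx) (max_le_max_right _ ((abs_of_pos hx).trans_le hx1))
    · simp
    · simpa using ((htr v hv).const_mul v).mul (hψlim v)
  suffices h : Tendsto (fun ε => ∫ v, v * φ (ε, v) * ψ (ε, v)) (𝓝[>] 0)
      (𝓝 (∫ _ : ℝ, (0 : ℝ))) by rwa [integral_zero] at h
  refine tendsto_integral_filter_of_dominated_convergence
    ((Icc (-R) R).indicator fun _ => R * |C| * M) ?_ ?_ ?_ (ae_of_all _ hlim)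
  · filter_upwards [self_mem_nhdsWithin] with ε (hε : 0 < ε)
    have hφε : Continuous fun v => φ (ε, v) :=
      hφ.comp_continuous (by fun_prop) fun v => mem_Dinf.2 hε
    exact (continuous_id.mul hφε |>.mul (by fun_prop)).aestronglyMeasurable
  · filter_upwards [self_mem_nhdsWithin] with ε (hε : 0 < ε)
    exact ae_of_all _ (norm_mul_mul_le_indicator hR0 hR hC hM hε)
  · exact (integrable_indicator_iff measurableSet_Icc).2 (integrableOn_const measure_Icc_lt_top.ne)

theorem aecover_Ici_prod_univ :
    AECover (volume.restrict Dinf) (𝓝[>] 0) fun ε : ℝ => (Ici ε ×ˢ univ : Set P2) where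
  ae_eventually_mem := (ae_restrict_mem isOpen_Dinf.measurableSet).mono fun p hp => by
    filter_upwards [Ioc_mem_nhdsGT (mem_Dinf.1 hp)] with ε hε using ⟨hε.2, mem_univ _⟩
  measurableSet _ := measurableSet_Ici.prod MeasurableSet.univ

theorem IsClassicalSolZero.weakForm_eq_zero (hφ : IsClassicalSolZero φ) (hβ : -1 < β)
    (hb : ∀ R, ∃ C, ∀ p ∈ Dinf, ‖p‖ ≤ R → |φ p| ≤ C)
    (hb' : ∀ R, ∃ C, ∀ p ∈ Dinf, ‖p‖ ≤ R → |pdv φ p| ≤ C * p.1 ^ β)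
    (hψ : ContDiff ℝ 1 ψ) (hc : HasCompactSupport ψ) (hψ0 : ∀ v < 0, ψ (0, v) = 0) :
    -(∫ p in Dinf, φ p * (p.2 * pdx ψ p)) + ∫ p in Dinf, pdv φ p * pdv ψ p = 0 := by
  obtain ⟨hreg, hpde, htr⟩ := hφ
  have hφ1 : ContDiffOn ℝ 1 φ Dinf := hreg.of_le one_le_two
  have hψx : Continuous fun p => p.2 * pdx ψ p := continuous_snd.mul (continuous_pdx hψ)
  have hint : IntegrableOn (fun p => φ p * (p.2 * pdx ψ p)) Dinf :=
    integrableOn_mul_of_abs_le_rpow (β := 0) (by norm_num) hreg.continuousOn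
      (by simpa only [Real.rpow_zero, mul_one] using hb) hψx (hc.fderiv_apply ℝ _).mul_left
  have hint' : IntegrableOn (fun p => pdv φ p * pdv ψ p) Dinf :=
    integrableOn_mul_of_abs_le_rpow hβ (continuousOn_pdv isOpen_Dinf hφ1) hb' (continuous_pdv hψ)
      (hc.fderiv_apply ℝ _)
  rw [neg_add_eq_sub, ← integral_sub hint' hint]
  refine tendsto_nhds_unique
    (aecover_Ici_prod_univ.integral_tendsto_of_countably_generated (hint'.sub hint)) ?_
  refine (tendsto_integral_trace hreg.continuousOn hb htr hψ.continuous hc hψ0).congr' ?_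
  filter_upwards [self_mem_nhdsWithin] with ε (hε : 0 < ε)
  have hsub : (Ici ε ×ˢ univ : Set P2) ⊆ Dinf := fun p hp => mem_Dinf.2 (hε.trans_le hp.1)
  rw [Measure.restrict_restrict_of_subset hsub, ← setIntegral_weakForm_Ici hreg hpde hψ hc hε]

theorem IsClassicalSolZero.isWeakSolZero (hφ : IsClassicalSolZero φ) (hβ : -1 < β)
    (hb : ∀ R, ∃ C, ∀ p ∈ Dinf, ‖p‖ ≤ R → |φ p| ≤ C)
    (hb' : ∀ R, ∃ C, ∀ p ∈ Dinf, ‖p‖ ≤ R → |pdv φ p| ≤ C * p.1 ^ β) :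
    IsWeakSolZero φ (pdv φ) := by
  have hφ1 : ContDiffOn ℝ 1 φ Dinf := hφ.1.of_le one_le_two
  refine ⟨(hφ.1.continuousOn.pow 2).locallyIntegrableOn isOpen_Dinf.measurableSet,
    ((continuousOn_pdv isOpen_Dinf hφ1).pow 2).locallyIntegrableOn isOpen_Dinf.measurableSet,
    isWeakVDeriv_pdv isOpen_Dinf hφ1, fun ψ hψ hc hs => ?_⟩
  refine hφ.weakForm_eq_zero hβ hb hb' (hψ.of_le (by exact_mod_cast le_top)) hc
    fun v hv => image_eq_zero_of_notMem_tsupport fun h => ?_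
  exact hv.not_ge (hs ⟨h, rfl⟩).2

end WeakSolution

theorem IsClassicalSolZero.congr {φ ψ : P2 → ℝ} (hψ : IsClassicalSolZero ψ)
    (h : EqOn φ ψ Dinf) : IsClassicalSolZero φ := by
  refine ⟨hψ.1.congr h, fun p hp => ?_, fun v hv => (hψ.2.2 v hv).congr' ?_⟩
  · rw [pdx_congr h hp, pdv_congr (pdv_congr h) hp, hψ.2.1 p hp]
  · filter_upwards [self_mem_nhdsWithin] with x (hx : 0 < x)
    exact (h (mem_Dinf.2 hx : (x, v) ∈ Dinf)).symm

namespace IsProfile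

variable {α : ℝ} {G H : ℝ → ℝ}

theorem isClassicalSolZero (h : IsProfile α G H) (hG : SuperpolynomialDecay atTop id G) :
    IsClassicalSolZero (selfSimilar α G) :=
  ⟨contDiffOn_selfSimilar h.contDiff_fst, fun _ hp => h.pde_selfSimilar hp,
    fun _ hv => tendsto_selfSimilar_nhdsGT_zero hG hv⟩

theorem isWeakSolZero (h : IsProfile α G H) (hα : 0 ≤ α) (hdecay : SuperpolynomialDecay atTop id G)
    (hG : G =O[⊤] fun t => (1 + |t|) ^ (3 * α)) (hH : H =O[⊤] fun t => (1 + |t|) ^ (3 * α))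
    {φ : P2 → ℝ} (hφ : EqOn φ (selfSimilar α G) Dinf) : IsWeakSolZero φ (pdv φ) := by
  refine ((h.isClassicalSolZero hdecay).congr hφ).isWeakSolZero (β := -(1 / 3)) (by norm_num)
    (fun R => ?_) (fun R => ?_)
  · obtain ⟨C, hC⟩ := exists_abs_selfSimilar_le hα hG R
    exact ⟨C, fun p hp hpR => (congrArg abs (hφ hp)).trans_le (hC p hp hpR)⟩
  · obtain ⟨C, hC⟩ := exists_abs_selfSimilar_le hα hH R
    refine ⟨C, fun p hp hpR => ?_⟩
    have hx : 0 < p.1 := mem_Dinf.1 hp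
    rw [pdv_congr hφ hp, pdv_selfSimilar h.deriv_fst hp, selfSimilar_sub _ hp, abs_mul,
      abs_of_pos (Real.rpow_pos_of_pos hx _)]
    gcongr
    exact hC p hp hpR

end IsProfile

end

theorem statement_16 :
    -- `φ₋₁`
    (ContDiffOn ℝ 2 (fun p : P2 => phim1 p.1 p.2) (Set.Ioi (0:ℝ) ×ˢ (Set.univ : Set ℝ)) ∧
      (∀ p ∈ Set.Ioi (0:ℝ) ×ˢ (Set.univ : Set ℝ),
        p.2 * pdx (fun q : P2 => phim1 q.1 q.2) p
          = pdv (pdv (fun q : P2 => phim1 q.1 q.2)) p) ∧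
      (∀ v : ℝ, 0 < v →
        Tendsto (fun x => phim1 x v) (nhdsWithin 0 (Set.Ioi 0)) (nhds 0))) ∧
    -- `φ₀`
    (ContDiffOn ℝ 2 (fun p : P2 => phi0 p.1 p.2) (Set.Ioi (0:ℝ) ×ˢ (Set.univ : Set ℝ)) ∧
      (∀ p ∈ Set.Ioi (0:ℝ) ×ˢ (Set.univ : Set ℝ),
        p.2 * pdx (fun q : P2 => phi0 q.1 q.2) p
          = pdv (pdv (fun q : P2 => phi0 q.1 q.2)) p) ∧
      (∀ v : ℝ, 0 < v →
        Tendsto (fun x => phi0 x v) (nhdsWithin 0 (Set.Ioi 0)) (nhds 0))) ∧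
    -- `φ₁`
    (ContDiffOn ℝ 2 (fun p : P2 => phi1 p.1 p.2) (Set.Ioi (0:ℝ) ×ˢ (Set.univ : Set ℝ)) ∧
      (∀ p ∈ Set.Ioi (0:ℝ) ×ˢ (Set.univ : Set ℝ),
        p.2 * pdx (fun q : P2 => phi1 q.1 q.2) p
          = pdv (pdv (fun q : P2 => phi1 q.1 q.2)) p) ∧
      (∀ v : ℝ, 0 < v →
        Tendsto (fun x => phi1 x v) (nhdsWithin 0 (Set.Ioi 0)) (nhds 0))) ∧
    -- `φ₀` and `φ₁` are weak solutions with absorbing boundary condition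
    IsWeakSolZero (fun p : P2 => phi0 p.1 p.2) (pdv (fun p : P2 => phi0 p.1 p.2)) ∧
    IsWeakSolZero (fun p : P2 => phi1 p.1 p.2) (pdv (fun p : P2 => phi1 p.1 p.2)) := by
  have hprofile := isProfile_phi0Profile
  have hG := superpolynomialDecay_phi0Profile
  have hH := superpolynomialDecay_phi0ProfileDeriv
  have hG' := isBigO_phi0Profile
  have hH' := isBigO_phi0ProfileDeriv
  have hlower := (superpolynomialDecay_lowerProfile (α := 1 / 6) hG hH).const_mul 36
  have hraise := superpolynomialDecay_raiseProfile (α := 1 / 6) hG hH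
  refine ⟨?phim1, ?phi0, ?phi1, ?weak0, ?weak1⟩
  case phim1 =>
    exact ((hprofile.lower.const_mul 36).isClassicalSolZero hlower).congr eqOn_phim1_selfSimilar
  case phi0 => exact (hprofile.isClassicalSolZero hG).congr eqOn_phi0_selfSimilar
  case phi1 => exact (hprofile.raise.isClassicalSolZero hraise).congr eqOn_phi1_selfSimilar
  case weak0 =>
    exact hprofile.isWeakSolZero (by norm_num) hG hG' hH' eqOn_phi0_selfSimilar
  case weak1 =>
    exact hprofile.raise.isWeakSolZero (by norm_num) hraise (isBigO_raiseProfile hG' hH')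
      (isBigO_deriv_raiseProfile hG' hH') eqOn_phi1_selfSimilar
end
end

section
/- There exists a constant c ≥ 1 such that for all (x,v) with x > 0 the following two-sided bounds hold: (i) if 0 < x ≤ v³ (so v > 0), then c^{−1} x^{1/6} (v³/x)^{−5/6} e^{−v³/(9x)} ≤ φ₀(x,v) ≤ c x^{1/6} (v³/x)^{−5/6} e^{−v³/(9x)} and c^{−1} x^{−5/6} (v³/x)^{1/6} e^{−v³/(9x)} ≤ φ₋₁(x,v) ≤ c x^{−5/6} (v³/x)^{1/6} e^{−v³/(9x)}; (ii) if x ≥ |v|³, then c^{−1} x^{1/6} ≤ φ₀(x,v) ≤ c x^{1/6} and c^{−1} x^{−5/6} ≤ φ₋₁(x,v) ≤ c x^{−5/6}; (iii) if 0 < x ≤ −v³ (so v < 0), then c^{−1} |v|^{1/2} ≤ φ₀(x,v) ≤ c |v|^{1/2} and c^{−1} |v|^{−5/2} ≤ φ₋₁(x,v) ≤ c |v|^{−5/2}. In particular, φ₀ and φ₋₁ are strictly positive on (0,∞)×ℝ. -/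
noncomputable section

open MeasureTheory Set Filter
open scoped ENNReal

/-!
Writing `(1+ξ)^{-7/6}` as a Gamma integral and exchanging the integrations (Kummer's transformation)
turns `U₁` into a multiple of `∫₀^∞ e^{-ξ} ξ^{a-1} (z+ξ)^s dξ` with `a = 7/6`, `s = -5/6`, which is
the shape of `U₂` with `a = s = 1/6`. Since `(z+ξ)/(1+z)` lies between `1` and `ξ` for every
`z ≥ 0`, such an integral is comparable to `(1+z)^s`: the constants are the convergent integrals of
`e^{-ξ} ξ^{a-1}` against `min 1 ξ^s` and `max 1 ξ^s`.

Each of `φ₀`, `φ₋₁` is `x^t` times a function of the similarity variable `w = v³/x`, and the regions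
(i), (ii), (iii) are `w ≥ 1`, `|w| ≤ 1` and `w ≤ -1`. In the last one the profile is comparable to
`|w|^t`, with the same exponent `t`, so the powers of `x` cancel: `x^t |w|^t = |v|^{3t}`.
-/

open Asymptotics

lemma setIntegral_pos_of_forall_pos {α : Type*} [MeasurableSpace α] {μ : Measure α} {S : Set α}
    {f : α → ℝ} (hS : MeasurableSet S) (hμS : 0 < μ S) (hf : IntegrableOn f S μ)
    (hpos : ∀ ξ ∈ S, 0 < f ξ) : 0 < ∫ ξ in S, f ξ ∂μ := by
  have hsupport : Function.support f ∩ S = S := inter_eq_right.2 fun ξ hξ => (hpos ξ hξ).ne'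
  rwa [setIntegral_pos_iff_support_of_nonneg_ae
    (ae_restrict_of_forall_mem hS fun ξ hξ => (hpos ξ hξ).le) hf, hsupport]

section ShiftedGamma

/-- `∫₀^∞ e^{-ξ} ξ^{a-1} (z+ξ)^s dξ`, the common form of `U₁` and `U₂`. In terms of Tricomi's
confluent hypergeometric function it is `Γ(a) z^{a+s} U(a, a+s+1, z)`; keeping `z` outside the
exponential makes it finite at `z = 0` as soon as `0 < a` and `0 < a + s`. -/
def shiftedGamma (a s z : ℝ) : ℝ :=
  ∫ ξ in Ioi (0 : ℝ), Real.exp (-ξ) * ξ ^ (a - 1) * (z + ξ) ^ s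

variable {a s z ξ : ℝ}

lemma rpow_mem_uIcc_one {t : ℝ} (hξ : 0 < ξ) (ht : t ∈ uIcc 1 ξ) (s : ℝ) :
    t ^ s ∈ uIcc 1 (ξ ^ s) := by
  have hsub : uIcc 1 ξ ⊆ Ioi 0 := fun u hu => (lt_min one_pos hξ).trans_le hu.1
  rw [← Real.one_rpow s]
  rcases le_total 0 s with hs | hs
  · exact ((Real.monotoneOn_rpow_Ici_of_exponent_nonneg hs).mono
      (hsub.trans Ioi_subset_Ici_self)).mapsTo_uIcc ht
  · exact ((Real.antitoneOn_rpow_Ioi_of_exponent_nonpos hs).mono hsub).mapsTo_uIcc ht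

lemma add_rpow_mem_Icc (hz : 0 ≤ z) (hξ : 0 < ξ) (s : ℝ) :
    (z + ξ) ^ s ∈ Icc (min 1 (ξ ^ s) * (1 + z) ^ s) (max 1 (ξ ^ s) * (1 + z) ^ s) := by
  have hz1 : 0 < 1 + z := by linarith
  -- `(z + ξ) / (1 + z)` is the average of `1` and `ξ` with weights `z` and `1`.
  have hmem : (z + ξ) / (1 + z) ∈ uIcc 1 ξ := by
    constructor
    · rw [le_div_iff₀ hz1]
      nlinarith [min_le_left 1 ξ, min_le_right 1 ξ]
    · rw [div_le_iff₀ hz1]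
      nlinarith [le_max_left 1 ξ, le_max_right 1 ξ]
  obtain ⟨hlower, hupper⟩ := rpow_mem_uIcc_one hξ hmem s
  rw [Real.div_rpow (by positivity) hz1.le] at hlower hupper
  exact ⟨(le_div_iff₀ (by positivity)).1 hlower, (div_le_iff₀ (by positivity)).1 hupper⟩

lemma integrableOn_rpow_mul_exp_neg_mul {r : ℝ} (ha : 0 < a) (hr : 0 < r) :
    IntegrableOn (fun ξ : ℝ => ξ ^ (a - 1) * Real.exp (-(r * ξ))) (Ioi 0) := by
  simpa only [Real.rpow_one, neg_mul] using
    integrableOn_rpow_mul_exp_neg_mul_rpow (p := 1) (by linarith) one_pos hr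

lemma exp_neg_mul_rpow_mul_rpow (hξ : 0 < ξ) :
    Real.exp (-ξ) * ξ ^ (a - 1) * ξ ^ s = Real.exp (-ξ) * ξ ^ (a + s - 1) := by
  rw [mul_assoc, ← Real.rpow_add hξ]
  ring_nf

lemma integrableOn_min_weight (ha : 0 < a) (has : 0 < a + s) :
    IntegrableOn (fun ξ : ℝ => Real.exp (-ξ) * ξ ^ (a - 1) * min 1 (ξ ^ s)) (Ioi 0) := by
  refine ((Real.GammaIntegral_convergent ha).inf (Real.GammaIntegral_convergent has)).congr ?_
  refine ae_restrict_of_forall_mem measurableSet_Ioi fun ξ (hξ : 0 < ξ) => ?_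
  dsimp only [Pi.inf_apply]
  rw [mul_min_of_nonneg _ _ (by positivity), mul_one, exp_neg_mul_rpow_mul_rpow hξ]

lemma integrableOn_max_weight (ha : 0 < a) (has : 0 < a + s) :
    IntegrableOn (fun ξ : ℝ => Real.exp (-ξ) * ξ ^ (a - 1) * max 1 (ξ ^ s)) (Ioi 0) := by
  refine ((Real.GammaIntegral_convergent ha).sup (Real.GammaIntegral_convergent has)).congr ?_
  refine ae_restrict_of_forall_mem measurableSet_Ioi fun ξ (hξ : 0 < ξ) => ?_
  dsimp only [Pi.sup_apply]
  rw [mul_max_of_nonneg _ _ (by positivity), mul_one, exp_neg_mul_rpow_mul_rpow hξ]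

lemma integrableOn_shiftedGamma (ha : 0 < a) (has : 0 < a + s) (hz : 0 ≤ z) :
    IntegrableOn (fun ξ : ℝ => Real.exp (-ξ) * ξ ^ (a - 1) * (z + ξ) ^ s) (Ioi 0) := by
  refine ((integrableOn_max_weight ha has).mul_const ((1 + z) ^ s)).mono' (by fun_prop) ?_
  refine ae_restrict_of_forall_mem measurableSet_Ioi fun ξ (hξ : 0 < ξ) => ?_
  rw [Real.norm_of_nonneg (by positivity), mul_assoc _ (max _ _)]
  gcongr
  exact (add_rpow_mem_Icc hz hξ s).2

lemma shiftedGamma_pos (ha : 0 < a) (has : 0 < a + s) (hz : 0 ≤ z) : 0 < shiftedGamma a s z :=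
  setIntegral_pos_of_forall_pos measurableSet_Ioi (by simp) (integrableOn_shiftedGamma ha has hz)
    fun ξ (hξ : 0 < ξ) => by positivity

lemma shiftedGamma_isTheta (ha : 0 < a) (has : 0 < a + s) :
    shiftedGamma a s =Θ[𝓟 (Ici 0)] fun z => (1 + z) ^ s := by
  set m := ∫ ξ in Ioi (0 : ℝ), Real.exp (-ξ) * ξ ^ (a - 1) * min 1 (ξ ^ s)
  set M := ∫ ξ in Ioi (0 : ℝ), Real.exp (-ξ) * ξ ^ (a - 1) * max 1 (ξ ^ s)
  have hm : 0 < m := setIntegral_pos_of_forall_pos measurableSet_Ioi (by simp)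
    (integrableOn_min_weight ha has) fun ξ (hξ : 0 < ξ) => by positivity
  have hlower : ∀ z ∈ Ici (0 : ℝ), m * (1 + z) ^ s ≤ shiftedGamma a s z := fun z hz => by
    rw [← integral_mul_const]
    refine setIntegral_mono_on ((integrableOn_min_weight ha has).mul_const _)
      (integrableOn_shiftedGamma ha has hz) measurableSet_Ioi fun ξ (hξ : 0 < ξ) => ?_
    rw [mul_assoc _ (min _ _)]
    gcongr
    exact (add_rpow_mem_Icc hz hξ s).1
  have hupper : ∀ z ∈ Ici (0 : ℝ), shiftedGamma a s z ≤ M * (1 + z) ^ s := fun z hz => by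
    rw [← integral_mul_const]
    refine setIntegral_mono_on (integrableOn_shiftedGamma ha has hz)
      ((integrableOn_max_weight ha has).mul_const _) measurableSet_Ioi fun ξ (hξ : 0 < ξ) => ?_
    rw [mul_assoc _ (max _ _)]
    gcongr
    exact (add_rpow_mem_Icc hz hξ s).2
  constructor
  · refine isBigO_principal.2 ⟨M, fun z (hz : 0 ≤ z) => ?_⟩
    rw [Real.norm_of_nonneg (shiftedGamma_pos ha has hz).le, Real.norm_of_nonneg (by positivity)]
    exact hupper z hz
  · refine isBigO_principal.2 ⟨m⁻¹, fun z (hz : 0 ≤ z) => ?_⟩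
    rw [Real.norm_of_nonneg (shiftedGamma_pos ha has hz).le, Real.norm_of_nonneg (by positivity),
      le_inv_mul_iff₀ hm]
    exact hlower z hz

lemma integral_rpow_mul_exp_neg_mul {r : ℝ} (ha : 0 < a) (hr : 0 < r) :
    ∫ ξ in Ioi (0 : ℝ), ξ ^ (a - 1) * Real.exp (-(r * ξ)) = r ^ (-a) * Real.Gamma a := by
  rw [Real.integral_rpow_mul_exp_neg_mul_Ioi ha hr, one_div, Real.inv_rpow hr.le,
    Real.rpow_neg hr.le]

lemma integrable_kummer_kernel {p : ℝ} (ha : 0 < a) (hap : a < p) (hz : 0 ≤ z) :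
    Integrable (Function.uncurry fun ξ t : ℝ => Real.exp (-t) * t ^ (p - 1) *
      (ξ ^ (a - 1) * Real.exp (-((z + t) * ξ))))
      ((volume.restrict (Ioi 0)).prod (volume.restrict (Ioi 0))) := by
  refine (integrable_prod_iff' (by unfold Function.uncurry; fun_prop)).2 ⟨?_, ?_⟩
  · refine ae_restrict_of_forall_mem measurableSet_Ioi fun t (ht : 0 < t) => ?_
    simp only [Function.uncurry_apply_pair]
    exact (integrableOn_rpow_mul_exp_neg_mul ha (add_pos_of_nonneg_of_pos hz ht)).const_mul _
  · refine ((integrableOn_shiftedGamma (a := p) (s := -a) (by linarith) (by linarith) hz).mul_const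
      (Real.Gamma a)).congr ?_
    refine ae_restrict_of_forall_mem measurableSet_Ioi fun t (ht : 0 < t) => ?_
    dsimp only
    rw [mul_assoc, ← integral_rpow_mul_exp_neg_mul ha (by positivity), ← integral_const_mul]
    refine setIntegral_congr_fun measurableSet_Ioi fun ξ (hξ : 0 < ξ) => ?_
    exact (Real.norm_of_nonneg (by positivity)).symm

/-- Kummer's transformation `U(a, b, z) = z^{1-b} U(a-b+1, 2-b, z)` in integral form. -/
lemma integral_exp_mul_rpow_mul_one_add_rpow {p : ℝ} (ha : 0 < a) (hap : a < p) (hz : 0 ≤ z) :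
    1 / Real.Gamma a *
        ∫ ξ in Ioi (0 : ℝ), Real.exp (-(z * ξ)) * ξ ^ (a - 1) * (1 + ξ) ^ (-p) =
      1 / Real.Gamma p * shiftedGamma p (-a) z := by
  have hp : 0 < p := ha.trans hap
  have hinner_t : ∀ ξ ∈ Ioi (0 : ℝ),
      ∫ t in Ioi (0 : ℝ), Real.exp (-t) * t ^ (p - 1) *
          (ξ ^ (a - 1) * Real.exp (-((z + t) * ξ))) =
        Real.exp (-(z * ξ)) * ξ ^ (a - 1) * (1 + ξ) ^ (-p) * Real.Gamma p :=
    fun ξ (hξ : 0 < ξ) => by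
      rw [mul_assoc _ _ (Real.Gamma p), ← integral_rpow_mul_exp_neg_mul hp (by positivity),
        ← integral_const_mul]
      refine integral_congr_ae (.of_forall fun t => ?_)
      dsimp only
      rw [show -((z + t) * ξ) = -(z * ξ) + -(t * ξ) by ring,
        show -((1 + ξ) * t) = -t + -(t * ξ) by ring, Real.exp_add, Real.exp_add]
      ring
  have hinner_ξ : ∀ t ∈ Ioi (0 : ℝ),
      ∫ ξ in Ioi (0 : ℝ), Real.exp (-t) * t ^ (p - 1) *
          (ξ ^ (a - 1) * Real.exp (-((z + t) * ξ))) =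
        Real.exp (-t) * t ^ (p - 1) * (z + t) ^ (-a) * Real.Gamma a :=
    fun t (ht : 0 < t) => by
      rw [integral_const_mul, integral_rpow_mul_exp_neg_mul ha (by positivity),
        mul_assoc _ _ (Real.Gamma a)]
  have hswap := integral_integral_swap (integrable_kummer_kernel ha hap hz)
  rw [setIntegral_congr_fun measurableSet_Ioi hinner_t,
    setIntegral_congr_fun measurableSet_Ioi hinner_ξ, integral_mul_const,
    integral_mul_const] at hswap
  rw [shiftedGamma, one_div_mul_eq_div, one_div_mul_eq_div,
    div_eq_div_iff (Real.Gamma_pos_of_pos ha).ne' (Real.Gamma_pos_of_pos hp).ne', hswap]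

end ShiftedGamma

lemma U1_eq_shiftedGamma {z : ℝ} (hz : 0 ≤ z) :
    U1 z = 1 / Real.Gamma (7/6) * shiftedGamma (7/6) (-(5:ℝ)/6) z := by
  rw [neg_div, ← integral_exp_mul_rpow_mul_one_add_rpow (by norm_num) (by norm_num) hz, U1]
  norm_num

lemma U2_eq_shiftedGamma (z : ℝ) :
    U2 z = 1 / Real.Gamma (1/6) * shiftedGamma (1/6) (1/6) z := by
  rw [U2, shiftedGamma]
  norm_num

lemma U1_pos {z : ℝ} (hz : 0 ≤ z) : 0 < U1 z := by
  have := shiftedGamma_pos (a := 7/6) (s := -(5:ℝ)/6) (by norm_num) (by norm_num) hz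
  rw [U1_eq_shiftedGamma hz]
  positivity

lemma U2_pos {z : ℝ} (hz : 0 ≤ z) : 0 < U2 z := by
  have := shiftedGamma_pos (a := 1/6) (s := 1/6) (by norm_num) (by norm_num) hz
  rw [U2_eq_shiftedGamma]
  positivity

lemma U1_isTheta : U1 =Θ[𝓟 (Ici 0)] fun z => (1 + z) ^ (-(5:ℝ)/6) := by
  have hU1 : U1 =ᶠ[𝓟 (Ici 0)] fun z => 1 / Real.Gamma (7/6) * shiftedGamma (7/6) (-(5:ℝ)/6) z :=
    fun z hz => U1_eq_shiftedGamma hz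
  exact hU1.trans_isTheta ((shiftedGamma_isTheta (by norm_num) (by norm_num)).const_mul_left
    (by positivity))

lemma U2_isTheta : U2 =Θ[𝓟 (Ici 0)] fun z => (1 + z) ^ ((1:ℝ)/6) := by
  rw [funext U2_eq_shiftedGamma]
  exact (shiftedGamma_isTheta (by norm_num) (by norm_num)).const_mul_left (by positivity)

section TwoSidedComparison

variable {α : Type*}

lemma one_add_isTheta {δ : ℝ} (hδ : 0 < δ) : (fun z : ℝ => 1 + z) =Θ[𝓟 (Ici δ)] fun z => z := by
  constructor
  · refine isBigO_principal.2 ⟨δ⁻¹ + 1, fun z (hz : δ ≤ z) => ?_⟩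
    have hz0 : 0 < z := hδ.trans_le hz
    have : 1 ≤ δ⁻¹ * z := (one_le_inv_mul₀ hδ).2 hz
    rw [Real.norm_of_nonneg (by positivity), Real.norm_of_nonneg hz0.le]
    linarith
  · refine isBigO_principal.2 ⟨1, fun z (hz : δ ≤ z) => ?_⟩
    have hz0 : 0 < z := hδ.trans_le hz
    rw [Real.norm_of_nonneg hz0.le, Real.norm_of_nonneg (by positivity)]
    linarith

lemma isTheta_comp_of_mapsTo {β : Type*} {f g : β → ℝ} {s : Set β} (h : f =Θ[𝓟 s] g)
    {u : α → β} {t : Set α} (hu : MapsTo u t s) : (fun x => f (u x)) =Θ[𝓟 t] fun x => g (u x) :=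
  have hu := tendsto_principal_principal.2 hu
  ⟨h.1.comp_tendsto hu, h.2.comp_tendsto hu⟩

/-- The constant is taken in `∀ᶠ c in atTop`, so that finitely many comparisons can share it. -/
lemma eventually_mem_Icc_of_isTheta {f g : α → ℝ} {S : Set α} (h : f =Θ[𝓟 S] g)
    (hf : ∀ x ∈ S, 0 ≤ f x) (hg : ∀ x ∈ S, 0 ≤ g x) :
    ∀ᶠ c in atTop, ∀ x ∈ S, f x ∈ Icc (c⁻¹ * g x) (c * g x) := by
  obtain ⟨A, hA⟩ := isBigO_principal.1 h.1
  obtain ⟨B, hB⟩ := isBigO_principal.1 h.2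
  filter_upwards [eventually_gt_atTop 0, eventually_ge_atTop A, eventually_ge_atTop B]
    with c hc hAc hBc x hx
  have hfx := hf x hx
  have hgx := hg x hx
  have hupper := hA x hx
  have hlower := hB x hx
  rw [Real.norm_of_nonneg hfx, Real.norm_of_nonneg hgx] at hupper hlower
  constructor
  · rw [inv_mul_le_iff₀ hc]
    exact hlower.trans (by gcongr)
  · exact hupper.trans (by gcongr)

end TwoSidedComparison

section PowerGrowth

variable {f : ℝ → ℝ} {s : ℝ}

lemma isTheta_rpow_of_one_add_rpow (h : f =Θ[𝓟 (Ici 0)] fun z => (1 + z) ^ s) {b : ℝ}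
    (hb : 0 < b) : (fun w => f (w / b)) =Θ[𝓟 (Ici 1)] fun w => w ^ s := by
  have hlarge : f =Θ[𝓟 (Ici b⁻¹)] fun z => z ^ s := by
    have hpos : ∀ z ∈ Ici b⁻¹, 0 < z := fun z hz => (inv_pos.2 hb).trans_le hz
    refine (h.mono (principal_mono.2 fun z hz => (hpos z hz).le)).trans ?_
    exact (one_add_isTheta (inv_pos.2 hb)).rpow
      (eventually_principal.2 fun z hz => add_nonneg zero_le_one (hpos z hz).le)
      (eventually_principal.2 fun z hz => (hpos z hz).le)
  have hmaps : MapsTo (fun w => w / b) (Ici 1) (Ici b⁻¹) := fun w (hw : 1 ≤ w) => by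
    rw [mem_Ici, inv_eq_one_div]
    exact div_le_div_of_nonneg_right hw hb.le
  refine (isTheta_comp_of_mapsTo hlarge hmaps).trans ?_
  have hscale : (fun w : ℝ => (w / b) ^ s) =ᶠ[𝓟 (Ici 1)] fun w => (b ^ s)⁻¹ * w ^ s :=
    eventually_principal.2 fun w (hw : 1 ≤ w) => by
      dsimp only
      rw [Real.div_rpow (by linarith) hb.le, div_eq_inv_mul]
  exact hscale.trans_isTheta ((isTheta_refl _ _).const_mul_left (by positivity))

lemma isTheta_one_of_one_add_rpow (h : f =Θ[𝓟 (Ici 0)] fun z => (1 + z) ^ s) {b : ℝ}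
    (hb : 0 < b) : (fun w => f (w / b)) =Θ[𝓟 (Icc 0 1)] fun _ => (1 : ℝ) := by
  have hmaps : MapsTo (fun w => w / b) (Icc 0 1) (Ici 0) := fun w hw => div_nonneg hw.1 hb.le
  refine (isTheta_comp_of_mapsTo h hmaps).trans ?_
  have hpos : ∀ w ∈ Icc (0 : ℝ) 1, 0 < 1 + w / b := fun w hw =>
    add_pos_of_pos_of_nonneg one_pos (hmaps hw)
  refine ContinuousOn.isTheta_principal ?_ isCompact_Icc (by norm_num)
    fun w hw => (Real.rpow_pos_of_pos (hpos w hw) s).ne'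
  exact ContinuousOn.rpow_const (by fun_prop) fun w hw => .inl (hpos w hw).ne'

end PowerGrowth

section HomogeneousSolution

/-- The common form of `φ₀` and `φ₋₁` in the similarity variable `w = v³/x`: both are a power of `x`
times such a profile, with the roles of `U₁` and `U₂` exchanged. -/
def similarityProfile (κ : ℝ) (f g : ℝ → ℝ) (w : ℝ) : ℝ :=
  if w < 0 then f (-w / 9) else κ * Real.exp (-w / 9) * g (w / 9)

variable {κ t s : ℝ} {f g : ℝ → ℝ}

lemma similarityProfile_pos (hκ : 0 < κ) (hf : ∀ z, 0 ≤ z → 0 < f z) (hg : ∀ z, 0 ≤ z → 0 < g z)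
    (w : ℝ) : 0 < similarityProfile κ f g w := by
  rw [similarityProfile]
  split_ifs with hw
  · exact hf _ (by linarith)
  · have := hg (w / 9) (by linarith)
    positivity

lemma similarityProfile_eqOn_Ici :
    EqOn (similarityProfile κ f g) (fun w => κ * Real.exp (-w / 9) * g (w / 9)) (Ici 0) :=
  fun _ hw => if_neg (not_lt.2 hw)

lemma similarityProfile_isTheta_Ici_one (hκ : κ ≠ 0)
    (hg : g =Θ[𝓟 (Ici 0)] fun z => (1 + z) ^ s) :
    similarityProfile κ f g =Θ[𝓟 (Ici 1)] fun w => w ^ s * Real.exp (-w / 9) := by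
  have heq : similarityProfile κ f g =ᶠ[𝓟 (Ici 1)] fun w => κ * (g (w / 9) * Real.exp (-w / 9)) :=
    eventually_principal.2 fun w (hw : 1 ≤ w) => by
      rw [similarityProfile_eqOn_Ici (zero_le_one.trans hw)]
      ring
  exact heq.trans_isTheta
    (((isTheta_rpow_of_one_add_rpow hg (by norm_num)).mul (isTheta_refl _ _)).const_mul_left hκ)

lemma similarityProfile_isTheta_Iic_neg_one (hf : f =Θ[𝓟 (Ici 0)] fun z => (1 + z) ^ t) :
    similarityProfile κ f g =Θ[𝓟 (Iic (-1))] fun w => (-w) ^ t := by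
  have heq : similarityProfile κ f g =ᶠ[𝓟 (Iic (-1))] fun w => f (-w / 9) :=
    eventually_principal.2 fun w (hw : w ≤ -1) => if_pos (by linarith)
  exact heq.trans_isTheta (isTheta_comp_of_mapsTo (isTheta_rpow_of_one_add_rpow hf (by norm_num))
    fun w (hw : w ≤ -1) => le_neg.1 hw)

lemma similarityProfile_isTheta_Icc (hκ : κ ≠ 0) (hf : f =Θ[𝓟 (Ici 0)] fun z => (1 + z) ^ t)
    (hg : g =Θ[𝓟 (Ici 0)] fun z => (1 + z) ^ s) :
    similarityProfile κ f g =Θ[𝓟 (Icc (-1) 1)] fun _ => (1 : ℝ) := by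
  have hneg : similarityProfile κ f g =Θ[𝓟 (Ico (-1) 0)] fun _ => (1 : ℝ) := by
    have heq : similarityProfile κ f g =ᶠ[𝓟 (Ico (-1) 0)] fun w => f (-w / 9) :=
      eventually_principal.2 fun w hw => if_pos hw.2
    have hmaps : MapsTo (fun w : ℝ => -w) (Ico (-1) 0) (Icc 0 1) := fun w hw =>
      ⟨by linarith [hw.2], by linarith [hw.1]⟩
    exact heq.trans_isTheta
      (isTheta_comp_of_mapsTo (isTheta_one_of_one_add_rpow hf (by norm_num)) hmaps)
  have hnonneg : similarityProfile κ f g =Θ[𝓟 (Icc 0 1)] fun _ => (1 : ℝ) := by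
    have heq : similarityProfile κ f g =ᶠ[𝓟 (Icc 0 1)]
        fun w => κ * (Real.exp (-w / 9) * g (w / 9)) :=
      eventually_principal.2 fun w hw => by
        rw [similarityProfile_eqOn_Ici hw.1]
        ring
    have hexp : (fun w : ℝ => Real.exp (-w / 9)) =Θ[𝓟 (Icc 0 1)] fun _ => (1 : ℝ) :=
      ContinuousOn.isTheta_principal (by fun_prop) isCompact_Icc (by norm_num)
        fun w _ => (Real.exp_pos _).ne'
    have hmul := (hexp.mul (isTheta_one_of_one_add_rpow hg (by norm_num : (0 : ℝ) < 9)))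
    simp only [mul_one] at hmul
    exact heq.trans_isTheta (hmul.const_mul_left hκ)
  rw [← Ico_union_Icc_eq_Icc (by norm_num : (-1 : ℝ) ≤ 0) zero_le_one, ← sup_principal]
  exact hneg.sup hnonneg

lemma mul_rpow_cube_div {x y : ℝ} (hx : 0 < x) (hy : 0 ≤ y) (t : ℝ) :
    x ^ t * (y ^ 3 / x) ^ t = y ^ (3 * t) := by
  rw [← Real.mul_rpow hx.le (by positivity), mul_div_cancel₀ _ hx.ne', Real.rpow_mul hy]
  norm_cast

lemma eventually_homogeneous_bounds (hκ : 0 < κ) (hf : f =Θ[𝓟 (Ici 0)] fun z => (1 + z) ^ t)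
    (hg : g =Θ[𝓟 (Ici 0)] fun z => (1 + z) ^ s) (hf0 : ∀ z, 0 ≤ z → 0 < f z)
    (hg0 : ∀ z, 0 ≤ z → 0 < g z) :
    ∀ᶠ c in atTop, ∀ x v : ℝ, 0 < x →
      (x ≤ v ^ 3 → x ^ t * similarityProfile κ f g (v ^ 3 / x) ∈
        Icc (c⁻¹ * (x ^ t * (v ^ 3 / x) ^ s * Real.exp (-(v ^ 3) / (9 * x))))
          (c * (x ^ t * (v ^ 3 / x) ^ s * Real.exp (-(v ^ 3) / (9 * x))))) ∧
      (|v| ^ 3 ≤ x → x ^ t * similarityProfile κ f g (v ^ 3 / x) ∈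
        Icc (c⁻¹ * x ^ t) (c * x ^ t)) ∧
      (x ≤ -(v ^ 3) → x ^ t * similarityProfile κ f g (v ^ 3 / x) ∈
        Icc (c⁻¹ * |v| ^ (3 * t)) (c * |v| ^ (3 * t))) := by
  have hP (w : ℝ) : 0 ≤ similarityProfile κ f g w := (similarityProfile_pos hκ hf0 hg0 w).le
  filter_upwards [
    eventually_mem_Icc_of_isTheta (similarityProfile_isTheta_Ici_one (f := f) hκ.ne' hg)
      (fun w _ => hP w) fun w (hw : 1 ≤ w) => by positivity,
    eventually_mem_Icc_of_isTheta (similarityProfile_isTheta_Icc hκ.ne' hf hg)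
      (fun w _ => hP w) fun _ _ => zero_le_one,
    eventually_mem_Icc_of_isTheta (similarityProfile_isTheta_Iic_neg_one (κ := κ) (g := g) hf)
      (fun w _ => hP w) fun w (hw : w ≤ -1) => Real.rpow_nonneg (by linarith) t]
    with c hpos hmid hneg x v hx
  have hscale {a b y : ℝ} (hy : y ∈ Icc (a * b) (c * b)) :
      x ^ t * y ∈ Icc (a * (x ^ t * b)) (c * (x ^ t * b)) := by
    rw [mul_left_comm a, mul_left_comm c]
    exact ⟨by gcongr; exact hy.1, by gcongr; exact hy.2⟩
  refine ⟨fun h => ?_, fun h => ?_, fun h => ?_⟩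
  · have key := hscale (hpos _ ((one_le_div₀ hx).2 h))
    rwa [← mul_assoc (x ^ t), show -(v ^ 3 / x) / 9 = -(v ^ 3) / (9 * x) by field_simp] at key
  · have hw : |v ^ 3 / x| ≤ 1 := by rwa [abs_div, abs_pow, abs_of_pos hx, div_le_one hx]
    simpa only [mul_one] using hscale (hmid _ (abs_le.1 hw))
  · have hcube : |v| ^ 3 = -(v ^ 3) := by
      rw [← abs_pow, abs_of_nonpos (by linarith)]
    have hw : v ^ 3 / x ≤ -1 := by
      rw [div_le_iff₀ hx]
      linarith
    have key := hscale (hneg _ hw)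
    rwa [← neg_div, ← hcube, mul_rpow_cube_div hx (abs_nonneg v)] at key

end HomogeneousSolution

lemma cube_div_neg_iff {x : ℝ} (hx : 0 < x) (v : ℝ) : v ^ 3 / x < 0 ↔ v < 0 := by
  rw [div_lt_iff₀ hx, zero_mul]
  exact Odd.pow_neg_iff (by decide)

lemma phi0_eq_similarityProfile {x : ℝ} (hx : 0 < x) (v : ℝ) :
    phi0 x v = x ^ ((1:ℝ)/6) *
      similarityProfile (Real.Gamma (7/6) / Real.Gamma (1/6)) U2 U1 (v ^ 3 / x) := by
  simp only [phi0, similarityProfile, cube_div_neg_iff hx]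
  rw [div_div, ← neg_div, div_div, mul_comm x 9]
  split_ifs
  · rfl
  · ring

lemma phim1_eq_similarityProfile {x : ℝ} (hx : 0 < x) (v : ℝ) :
    phim1 x v = x ^ (-(5:ℝ)/6) *
      similarityProfile (Real.Gamma (1/6) / Real.Gamma (7/6)) U1 U2 (v ^ 3 / x) := by
  simp only [phim1, similarityProfile, cube_div_neg_iff hx]
  rw [div_div, ← neg_div, div_div, mul_comm x 9]
  split_ifs
  · rfl
  · ring

lemma phi0_pos {x : ℝ} (hx : 0 < x) (v : ℝ) : 0 < phi0 x v := by
  rw [phi0_eq_similarityProfile hx]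
  exact mul_pos (by positivity)
    (similarityProfile_pos (by positivity) (fun _ => U2_pos) (fun _ => U1_pos) _)

lemma phim1_pos {x : ℝ} (hx : 0 < x) (v : ℝ) : 0 < phim1 x v := by
  rw [phim1_eq_similarityProfile hx]
  exact mul_pos (by positivity)
    (similarityProfile_pos (by positivity) (fun _ => U1_pos) (fun _ => U2_pos) _)

theorem statement_17 :
    ∃ c : ℝ, 1 ≤ c ∧
      (∀ x v : ℝ, 0 < x →
        ((x ≤ v ^ 3 →
            c⁻¹ * (x ^ ((1:ℝ)/6) * (v ^ 3 / x) ^ (-(5:ℝ)/6) * Real.exp (-(v ^ 3) / (9 * x)))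
                ≤ phi0 x v ∧
              phi0 x v
                ≤ c * (x ^ ((1:ℝ)/6) * (v ^ 3 / x) ^ (-(5:ℝ)/6) *
                    Real.exp (-(v ^ 3) / (9 * x))) ∧
              c⁻¹ * (x ^ (-(5:ℝ)/6) * (v ^ 3 / x) ^ ((1:ℝ)/6) * Real.exp (-(v ^ 3) / (9 * x)))
                ≤ phim1 x v ∧
              phim1 x v
                ≤ c * (x ^ (-(5:ℝ)/6) * (v ^ 3 / x) ^ ((1:ℝ)/6) *
                    Real.exp (-(v ^ 3) / (9 * x)))) ∧
          (|v| ^ 3 ≤ x →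
            c⁻¹ * x ^ ((1:ℝ)/6) ≤ phi0 x v ∧ phi0 x v ≤ c * x ^ ((1:ℝ)/6) ∧
              c⁻¹ * x ^ (-(5:ℝ)/6) ≤ phim1 x v ∧ phim1 x v ≤ c * x ^ (-(5:ℝ)/6)) ∧
          (x ≤ -(v ^ 3) →
            c⁻¹ * |v| ^ ((1:ℝ)/2) ≤ phi0 x v ∧ phi0 x v ≤ c * |v| ^ ((1:ℝ)/2) ∧
              c⁻¹ * |v| ^ (-(5:ℝ)/2) ≤ phim1 x v ∧ phim1 x v ≤ c * |v| ^ (-(5:ℝ)/2)))) ∧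
      ∀ x v : ℝ, 0 < x → 0 < phi0 x v ∧ 0 < phim1 x v := by
  have bounds_phi0 := eventually_homogeneous_bounds
    (κ := Real.Gamma (7/6) / Real.Gamma (1/6)) (by positivity) U2_isTheta U1_isTheta
    (fun _ => U2_pos) (fun _ => U1_pos)
  have bounds_phim1 := eventually_homogeneous_bounds
    (κ := Real.Gamma (1/6) / Real.Gamma (7/6)) (by positivity) U1_isTheta U2_isTheta
    (fun _ => U1_pos) (fun _ => U2_pos)
  obtain ⟨c, hc, h0, hm1⟩ :=
    ((eventually_ge_atTop 1).and (bounds_phi0.and bounds_phim1)).exists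
  refine ⟨c, hc, fun x v hx => ?_, fun x v hx => ⟨phi0_pos hx v, phim1_pos hx v⟩⟩
  specialize h0 x v hx
  specialize hm1 x v hx
  rw [← phi0_eq_similarityProfile hx, show 3 * ((1:ℝ)/6) = 1/2 by norm_num] at h0
  rw [← phim1_eq_similarityProfile hx, show 3 * (-(5:ℝ)/6) = -5/2 by norm_num] at hm1
  obtain ⟨hpos0, hmid0, hneg0⟩ := h0
  obtain ⟨hposm1, hmidm1, hnegm1⟩ := hm1
  exact ⟨fun h => and_assoc.1 ⟨hpos0 h, hposm1 h⟩, fun h => and_assoc.1 ⟨hmid0 h, hmidm1 h⟩,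
    fun h => and_assoc.1 ⟨hneg0 h, hnegm1 h⟩⟩
end
end
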